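/- arXiv:1910.02946 — 5 statements merged into one kernel-verified Lean document; each statement's English description precedes it below -/
import Mathlib

section
/- Let β_n > β_{n−1} > ⋯ > β_1 ≥ 0 be real numbers. Let β_* be the maximum of those β_j (j < n) for which β_n − β_j is not an integer, and set β_* = 0 if no such β_j exists. Then the intersection X_{β_1} ∩ ⋯ ∩ X_{β_n} equals the direct sum of the span of {t^{β_n−⌈β_n−β_*⌉}, …, t^{β_n−1}} and I^{β_n}(L¹[0,b]): every f in the intersection can be written in exactly one way as a linear combination of t^{β_n−⌈β_n−β_*⌉}, …, t^{β_n−1} plus a function in I^{β_n}(L¹[0,b]), and conversely every such sum lies in the intersection. In particular I^{β_n}(L¹[0,b]) ⊆ X_{β_1} ∩ ⋯ ∩ X_{β_n}, with codimension ⌈β_n − β_*⌉. -/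
open MeasureTheory Set Filter Topology

open Classical in
/-- Riemann–Liouville fractional integral of order `α` with base point `0`;
`RL 0` is the identity operator. -/
noncomputable def RL (α : ℝ) (f : ℝ → ℝ) : ℝ → ℝ := fun t =>
  if α = 0 then f t
  else (1 / Real.Gamma α) * ∫ s in (0:ℝ)..t, (t - s) ^ (α - 1) * f s

/-- `g ∈ AC[0,b]`: `g t = g 0 + ∫₀ᵗ φ` for some `φ ∈ L¹[0,b]`. -/
def MemAC (b : ℝ) (g : ℝ → ℝ) : Prop :=
  ∃ φ : ℝ → ℝ, IntegrableOn φ (Set.Icc 0 b) volume ∧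
    ∀ t ∈ Set.Icc (0:ℝ) b, g t = g 0 + ∫ s in (0:ℝ)..t, φ s

/-- `g ∈ AC^n[0,b]`: `g ∈ C^{n-1}[0,b]` and `D^{n-1} g ∈ AC[0,b]`. -/
def MemACn (b : ℝ) (n : ℕ) (g : ℝ → ℝ) : Prop :=
  ContDiffOn ℝ (n - 1 : ℕ) g (Set.Icc 0 b) ∧
    MemAC b (iteratedDerivWithin (n - 1) g (Set.Icc 0 b))

/-- `f ∈ X_α`, the space of functions with summable fractional derivative of order `α`:
`f ∈ L¹[0,b]` and (for `α ≠ 0`) `I^{⌈α⌉-α} f ∈ AC^{⌈α⌉}[0,b]`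
(as an element of `L¹`, i.e. it has an `AC^{⌈α⌉}` representative); `X_0 = L¹[0,b]`. -/
def MemX (b : ℝ) (α : ℝ) (f : ℝ → ℝ) : Prop :=
  IntegrableOn f (Set.Icc 0 b) volume ∧
    (α ≠ 0 → ∃ g : ℝ → ℝ,
      g =ᵐ[volume.restrict (Set.Icc 0 b)] RL ((⌈α⌉₊ : ℝ) - α) f ∧ MemACn b ⌈α⌉₊ g)


lemma beta_real {u v t : ℝ} (hu : 0 < u) (hv : 0 < v) (ht : 0 < t) :
    ∫ s in (0:ℝ)..t, s ^ (u - 1) * (t - s) ^ (v - 1)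
      = Real.Gamma u * Real.Gamma v / Real.Gamma (u + v) * t ^ (u + v - 1) := by
  have h1 := Complex.betaIntegral_scaled (u : ℂ) (v : ℂ) ht
  have h2 := Complex.Gamma_mul_Gamma_eq_betaIntegral (s := (u:ℂ)) (t := (v:ℂ)) (by simpa) (by simpa)
  have hne : Complex.Gamma ((u:ℂ) + v) ≠ 0 := by
    rw [← Complex.ofReal_add, Complex.Gamma_ofReal]
    exact_mod_cast (Real.Gamma_pos_of_pos (add_pos hu hv)).ne'
  have h3 : Complex.betaIntegral u v
      = Complex.Gamma u * Complex.Gamma v / Complex.Gamma ((u:ℂ) + v) := by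
    rw [h2, mul_div_cancel_left₀ _ hne]
  rw [h3] at h1
  apply Complex.ofReal_injective
  rw [← intervalIntegral.integral_ofReal]
  have : (∫ x in (0:ℝ)..t, (((x ^ (u - 1) * (t - x) ^ (v - 1) : ℝ)) : ℂ))
      = ∫ x in (0:ℝ)..t, (x : ℂ) ^ ((u:ℂ) - 1) * ((t:ℂ) - x) ^ ((v:ℂ) - 1) := by
    apply intervalIntegral.integral_congr
    intro x hx
    rw [uIcc_of_le ht.le] at hx
    simp only
    push_cast
    rw [Complex.ofReal_cpow hx.1, Complex.ofReal_cpow (by linarith [hx.2])]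
    push_cast; rfl
  rw [this, h1]
  push_cast
  rw [Complex.ofReal_cpow ht.le]
  simp only [← Complex.Gamma_ofReal]
  push_cast
  ring

noncomputable def ff (b : ℝ) (f : ℝ → ℝ) : ℝ → ℝ := (Ioc 0 b).indicator f
noncomputable def kk (b α : ℝ) : ℝ → ℝ := (Icc 0 b).indicator (fun t => t ^ (α - 1))
noncomputable def cv (f g : ℝ → ℝ) : ℝ → ℝ :=
  convolution f g (ContinuousLinearMap.mul ℝ ℝ) volume

lemma cv_eq (f g : ℝ → ℝ) (t : ℝ) : cv f g t = ∫ s, f s * g (t - s) := by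
  simp [cv, convolution]

lemma ff_int {b : ℝ} {f : ℝ → ℝ} (hf : IntegrableOn f (Icc 0 b) volume) : Integrable (ff b f) := by
  unfold ff
  rw [integrable_indicator_iff measurableSet_Ioc]
  exact hf.mono_set Ioc_subset_Icc_self

lemma pow_int {b γ : ℝ} (hb : 0 < b) (hγ : -1 < γ) :
    IntegrableOn (fun t : ℝ => t ^ γ) (Icc 0 b) volume := by
  rw [integrableOn_Icc_iff_integrableOn_Ioc, ← intervalIntegrable_iff_integrableOn_Ioc_of_le hb.le]
  exact intervalIntegral.intervalIntegrable_rpow' hγ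

lemma kk_int {b α : ℝ} (hb : 0 < b) (hα : 0 < α) : Integrable (kk b α) := by
  unfold kk
  rw [integrable_indicator_iff measurableSet_Icc]
  exact pow_int hb (by linarith)

lemma ker_eq {b α : ℝ} {f : ℝ → ℝ} {t : ℝ} (ht : t ∈ Icc 0 b) (s : ℝ) :
    ff b f s * kk b α (t - s) = (Ioc 0 t).indicator (fun s => (t - s) ^ (α - 1) * f s) s := by
  unfold ff kk
  obtain ⟨h0, h1⟩ := ht
  by_cases hs : s ∈ Ioc 0 t
  · rw [indicator_of_mem hs, indicator_of_mem (show s ∈ Ioc 0 b from ⟨hs.1, hs.2.trans h1⟩),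
      indicator_of_mem (show t - s ∈ Icc 0 b from ⟨by linarith [hs.2], by linarith [hs.1]⟩), mul_comm]
  · rw [indicator_of_notMem hs]
    by_cases h : s ∈ Ioc 0 b
    · rw [indicator_of_notMem (s := Icc 0 b), mul_zero]
      intro h'
      exact hs ⟨h.1, by linarith [h'.1]⟩
    · rw [indicator_of_notMem h, zero_mul]

lemma RL_eq_cv {b α : ℝ} (hα : α ≠ 0) (f : ℝ → ℝ) {t : ℝ} (ht : t ∈ Icc 0 b) :
    RL α f t = (1 / Real.Gamma α) * cv (ff b f) (kk b α) t := by
  rw [RL, if_neg hα, cv_eq]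
  simp_rw [ker_eq ht]
  rw [integral_indicator measurableSet_Ioc, intervalIntegral.integral_of_le ht.1]

lemma RL_zero (f : ℝ → ℝ) : RL 0 f = f := by
  funext t; simp [RL]

lemma ae_Icc {b : ℝ} {p : ℝ → Prop} (h : ∀ t ∈ Ioc 0 b, p t) :
    ∀ᵐ t ∂(volume.restrict (Icc (0:ℝ) b)), p t := by
  rw [← Measure.restrict_congr_set (Ioc_ae_eq_Icc (μ := volume) (a := (0:ℝ)) (b := b))]
  exact (ae_restrict_iff' measurableSet_Ioc).2 (Eventually.of_forall h)

lemma ae_mem_Ioc {b : ℝ} : ∀ᵐ t ∂(volume.restrict (Icc (0:ℝ) b)), t ∈ Ioc 0 b :=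
  ae_Icc (fun _ h => h)

lemma RL_congr {b α : ℝ} (hα : α ≠ 0) {f g : ℝ → ℝ}
    (h : f =ᵐ[volume.restrict (Icc 0 b)] g) {t : ℝ} (ht : t ∈ Icc 0 b) : RL α f t = RL α g t := by
  rw [RL, RL, if_neg hα, if_neg hα]
  congr 1
  apply intervalIntegral.integral_congr_ae
  have := (ae_restrict_iff' measurableSet_Icc).1 h
  filter_upwards [this] with s hs hs'
  rw [uIoc_of_le ht.1] at hs'
  rw [hs ⟨hs'.1.le, hs'.2.trans ht.2⟩]

lemma RL_congr_ae {b α : ℝ} {f g : ℝ → ℝ}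
    (h : f =ᵐ[volume.restrict (Icc 0 b)] g) :
    RL α f =ᵐ[volume.restrict (Icc 0 b)] RL α g := by
  by_cases hα : α = 0
  · subst hα; rw [RL_zero, RL_zero]; exact h
  · exact ae_Icc fun t ht => RL_congr hα h (Ioc_subset_Icc_self ht)

lemma RL_int {b α : ℝ} (hb : 0 < b) (hα : 0 ≤ α) {f : ℝ → ℝ}
    (hf : IntegrableOn f (Icc 0 b) volume) : IntegrableOn (RL α f) (Icc 0 b) volume := by
  rcases hα.eq_or_lt with rfl | hα
  · simpa [RL_zero]
  have h : Integrable (cv (ff b f) (kk b α)) :=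
    (ff_int hf).integrable_convolution (ContinuousLinearMap.mul ℝ ℝ) (kk_int hb hα)
  refine ((h.const_mul (1 / Real.Gamma α)).integrableOn (s := Icc 0 b)).congr_fun ?_ measurableSet_Icc
  intro t ht
  exact (RL_eq_cv hα.ne' f ht).symm

/-- a.e. existence of the integral -/
lemma RL_ae_exists {b α : ℝ} (hb : 0 < b) (hα : 0 < α) {f : ℝ → ℝ}
    (hf : IntegrableOn f (Icc 0 b) volume) :
    ∀ᵐ t ∂(volume.restrict (Icc (0:ℝ) b)),
      IntervalIntegrable (fun s => (t - s) ^ (α - 1) * f s) volume 0 t := by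
  have h := (ff_int hf).ae_convolution_exists (ContinuousLinearMap.mul ℝ ℝ) (kk_int hb hα)
  filter_upwards [ae_restrict_of_ae h, ae_mem_Ioc] with t h1 h2
  have h1 : Integrable (fun s => ff b f s * kk b α (t - s)) := h1
  simp_rw [ker_eq (Ioc_subset_Icc_self h2)] at h1
  rw [intervalIntegrable_iff_integrableOn_Ioc_of_le h2.1.le]
  exact (integrable_indicator_iff measurableSet_Ioc).1 h1

lemma RL_add {b α : ℝ} (hb : 0 < b) (hα : 0 ≤ α) {f g : ℝ → ℝ}
    (hf : IntegrableOn f (Icc 0 b) volume) (hg : IntegrableOn g (Icc 0 b) volume) :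
    RL α (fun t => f t + g t) =ᵐ[volume.restrict (Icc 0 b)] fun t => RL α f t + RL α g t := by
  rcases hα.eq_or_lt with rfl | hα
  · simp [RL_zero]
  filter_upwards [RL_ae_exists hb hα hf, RL_ae_exists hb hα hg] with t h1 h2
  simp only [RL, if_neg hα.ne', mul_add]
  rw [intervalIntegral.integral_add h1 h2, mul_add]

lemma RL_smul (α c : ℝ) (f : ℝ → ℝ) (t : ℝ) :
    RL α (fun t => c * f t) t = c * RL α f t := by
  unfold RL
  split_ifs
  · rfl
  · rw [mul_left_comm, ← intervalIntegral.integral_const_mul c]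
    congr 1
    apply intervalIntegral.integral_congr
    intro s _; simp only; ring

lemma RL_zero_fun (α t : ℝ) : RL α (fun _ => 0) t = 0 := by
  simp [RL]

lemma RL_one (f : ℝ → ℝ) (t : ℝ) : RL 1 f t = ∫ s in (0:ℝ)..t, f s := by
  simp [RL]

lemma RL_pow {α γ t : ℝ} (hα : 0 ≤ α) (hγ : -1 < γ) (ht : 0 < t) :
    RL α (fun s => s ^ γ) t = Real.Gamma (γ + 1) / Real.Gamma (γ + 1 + α) * t ^ (γ + α) := by
  rcases hα.eq_or_lt with rfl | hα
  · simp [RL_zero, (Real.Gamma_pos_of_pos (by linarith : 0 < γ + 1)).ne']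
  have := beta_real (u := γ + 1) (v := α) (t := t) (by linarith) hα ht
  rw [RL, if_neg hα.ne']
  have e : ∀ s : ℝ, (t - s) ^ (α - 1) * s ^ γ = s ^ (γ + 1 - 1) * (t - s) ^ (α - 1) := by
    intro s; rw [mul_comm]; congr 2; ring
  simp_rw [e]
  rw [this]
  have := (Real.Gamma_pos_of_pos hα).ne'
  rw [show γ + 1 + α - 1 = γ + α by ring]
  field_simp

lemma cv_kk {b u v t : ℝ} (hu : 0 < u) (hv : 0 < v) (ht : t ∈ Ioc 0 b) :
    cv (kk b u) (kk b v) t = Real.Gamma u * Real.Gamma v / Real.Gamma (u + v) * t ^ (u + v - 1) := by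
  rw [← beta_real hu hv ht.1, cv_eq, intervalIntegral.integral_of_le ht.1.le,
    ← integral_Icc_eq_integral_Ioc, ← integral_indicator measurableSet_Icc]
  congr 1; ext s
  unfold kk
  by_cases hs : s ∈ Icc 0 t
  · rw [indicator_of_mem hs, indicator_of_mem (show s ∈ Icc 0 b from ⟨hs.1, hs.2.trans ht.2⟩),
      indicator_of_mem (show t - s ∈ Icc 0 b from ⟨by linarith [hs.2], by linarith [hs.1, ht.2]⟩)]
  · rw [indicator_of_notMem hs]
    by_cases h : s ∈ Icc 0 b
    · rw [indicator_of_notMem (s := Icc 0 b) (a := t - s), mul_zero]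
      intro h'
      exact hs ⟨h.1, by linarith [h'.1]⟩
    · rw [indicator_of_notMem h, zero_mul]

lemma cv_causal {b u v t : ℝ} (hu : u ≠ 0) {f : ℝ → ℝ} (ht : t ∈ Icc 0 b) :
    cv (ff b (RL u f)) (kk b v) t = (1 / Real.Gamma u) * cv (cv (ff b f) (kk b u)) (kk b v) t := by
  rw [cv_eq, cv_eq, ← integral_const_mul]
  congr 1; ext s
  by_cases hs : s ∈ Ioc 0 b
  · rw [ff, indicator_of_mem hs, RL_eq_cv hu f (Ioc_subset_Icc_self hs)]; ring
  · rw [ff, indicator_of_notMem hs]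
    rcases le_or_gt s 0 with h | h
    · have : cv (ff b f) (kk b u) s = 0 := by
        rw [cv_eq]
        rw [← integral_zero ℝ ℝ]
        congr 1; ext r
        unfold ff kk
        by_cases hr : r ∈ Ioc 0 b
        · rw [indicator_of_notMem (s := Icc 0 b), mul_zero]
          intro h'; linarith [h'.1, hr.1]
        · rw [indicator_of_notMem hr, zero_mul]
      rw [this]; simp
    · have : kk b v (t - s) = 0 := by
        apply indicator_of_notMem
        intro h'
        exact hs ⟨h, by linarith [h'.1, ht.2]⟩
      rw [this]; simp

lemma cv_assoc {f g k : ℝ → ℝ} (hf : Integrable f) (hg : Integrable g) (hk : Integrable k) :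
    ∀ᵐ t, cv (cv f g) k t = cv f (cv g k) t := by
  have h1 := hf.norm.ae_convolution_exists (ContinuousLinearMap.mul ℝ ℝ)
    (hg.norm.integrable_convolution (ContinuousLinearMap.mul ℝ ℝ) hk.norm)
  filter_upwards [h1] with t ht
  exact convolution_assoc _ _ _ _ (fun x y z => by simp [mul_assoc]) hf.1 hg.1 hk.1
    (hf.ae_convolution_exists _ hg) (hg.norm.ae_convolution_exists _ hk.norm) ht

lemma RL_RL {b u v : ℝ} (hb : 0 < b) (hu : 0 ≤ u) (hv : 0 ≤ v) {f : ℝ → ℝ}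
    (hf : IntegrableOn f (Icc 0 b) volume) :
    RL v (RL u f) =ᵐ[volume.restrict (Icc 0 b)] RL (u + v) f := by
  rcases hu.eq_or_lt with rfl | hu
  · simp [RL_zero]
  rcases hv.eq_or_lt with rfl | hv
  · simp [RL_zero]
  have huv : u + v ≠ 0 := by positivity
  filter_upwards [ae_restrict_of_ae (cv_assoc (ff_int hf) (kk_int hb hu) (kk_int hb hv)),
    ae_mem_Ioc] with t h1 h2
  have h2' := Ioc_subset_Icc_self h2
  rw [RL_eq_cv hv.ne' _ h2', cv_causal hu.ne' h2', h1, RL_eq_cv huv f h2']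
  have g1 := (Real.Gamma_pos_of_pos hu).ne'
  have g2 := (Real.Gamma_pos_of_pos hv).ne'
  have g3 := (Real.Gamma_pos_of_pos (add_pos hu hv)).ne'
  have : cv (ff b f) (cv (kk b u) (kk b v)) t =
      Real.Gamma u * Real.Gamma v / Real.Gamma (u + v) * cv (ff b f) (kk b (u + v)) t := by
    rw [cv_eq, cv_eq, ← integral_const_mul]
    apply integral_congr_ae
    have : ∀ᵐ s : ℝ, s ≠ t := by simp [ae_iff]
    filter_upwards [this] with s hs
    by_cases hs1 : s ∈ Ioc 0 b
    · rcases lt_or_ge s t with h | h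
      · have h3 : t - s ∈ Ioc 0 b := ⟨by linarith, by linarith [hs1.1, h2.2]⟩
        rw [cv_kk hu hv h3, kk, indicator_of_mem (Ioc_subset_Icc_self h3)]
        ring
      · have h : t < s := lt_of_le_of_ne h (Ne.symm hs)
        have e1 : kk b (u + v) (t - s) = 0 := by
          apply indicator_of_notMem; intro h'; linarith [h'.1]
        have e2 : cv (kk b u) (kk b v) (t - s) = 0 := by
          rw [cv_eq, ← integral_zero ℝ ℝ]
          congr 1; ext r
          unfold kk
          by_cases hr : r ∈ Icc 0 b
          · rw [indicator_of_notMem (s := Icc 0 b) (a := t - s - r), mul_zero]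
            intro h'; linarith [h'.1, hr.1]
          · rw [indicator_of_notMem hr, zero_mul]
        rw [e1, e2]; simp
    · rw [ff, indicator_of_notMem hs1]; simp
  rw [this]
  field_simp

lemma RL_one_inj {b : ℝ} (hb : 0 < b) {f : ℝ → ℝ} (hf : IntegrableOn f (Icc 0 b) volume)
    (h : RL 1 f =ᵐ[volume.restrict (Icc 0 b)] fun _ => 0) :
    f =ᵐ[volume.restrict (Icc 0 b)] fun _ => 0 := by
  have h0 : EqOn (RL 1 f) (fun _ => 0) (Ioo 0 b) := by
    have h' : RL 1 f =ᵐ[volume.restrict (Ioo 0 b)] fun _ => 0 :=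
      ae_restrict_of_ae_restrict_of_subset Ioo_subset_Icc_self h
    have hc : ContinuousOn (RL 1 f) (Ioo 0 b) := by
      have : RL 1 f = fun t => ∫ s in (0:ℝ)..t, f s := by funext t; exact RL_one f t
      rw [this]
      have := intervalIntegral.continuousOn_primitive_interval (f := f) (μ := volume) (a := 0) (b := b)
        (by rwa [uIcc_of_le hb.le])
      rw [uIcc_of_le hb.le] at this
      exact this.mono Ioo_subset_Icc_self
    exact Measure.eqOn_open_of_ae_eq h' isOpen_Ioo hc continuousOn_const
  have hi : IntervalIntegrable f volume 0 b :=
    (intervalIntegrable_iff_integrableOn_Icc_of_le hb.le).2 hf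
  have := hi.ae_hasDerivAt_integral
  rw [uIcc_of_le hb.le] at this
  have hne : ∀ᵐ s : ℝ, s ≠ b := by simp [ae_iff]
  filter_upwards [ae_restrict_of_ae this, ae_mem_Ioc, ae_restrict_of_ae hne] with t h1 h2 h3
  have h4 : t ∈ Ioo 0 b := ⟨h2.1, lt_of_le_of_ne h2.2 h3⟩
  have h5 := h1 (Ioc_subset_Icc_self h2) 0 ⟨le_rfl, hb.le⟩
  have h6 : (fun x => ∫ (t : ℝ) in (0:ℝ)..x, f t) =ᶠ[𝓝 t] fun _ => 0 := by
    filter_upwards [isOpen_Ioo.mem_nhds h4] with x hx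
    rw [← RL_one]; exact h0 hx
  exact (h5.congr_of_eventuallyEq h6.symm).unique (hasDerivAt_const t 0)

lemma RL_nat_inj {b : ℝ} (hb : 0 < b) (m : ℕ) : ∀ {f : ℝ → ℝ}, IntegrableOn f (Icc 0 b) volume →
    RL m f =ᵐ[volume.restrict (Icc 0 b)] (fun _ => 0) →
    f =ᵐ[volume.restrict (Icc 0 b)] fun _ => 0 := by
  induction m with
  | zero => intro f hf h; rw [Nat.cast_zero, RL_zero] at h; exact h
  | succ m ih =>
    intro f hf h
    apply ih hf
    apply RL_one_inj hb (RL_int hb (by positivity) hf)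
    have := RL_RL hb (u := m) (v := 1) (by positivity) zero_le_one hf
    push_cast at h
    exact this.trans h

lemma RL_inj0 {b α : ℝ} (hb : 0 < b) (hα : 0 ≤ α) {f : ℝ → ℝ} (hf : IntegrableOn f (Icc 0 b) volume)
    (h : RL α f =ᵐ[volume.restrict (Icc 0 b)] (fun _ => 0)) :
    f =ᵐ[volume.restrict (Icc 0 b)] fun _ => 0 := by
  apply RL_nat_inj hb ⌈α⌉₊ hf
  have h1 : 0 ≤ (⌈α⌉₊ : ℝ) - α := sub_nonneg.2 (Nat.le_ceil α)
  have h2 := RL_RL hb hα h1 hf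
  rw [add_sub_cancel] at h2
  refine h2.symm.trans ((RL_congr_ae h).trans ?_)
  exact Eventually.of_forall fun t => RL_zero_fun _ t

lemma RL_sub {b α : ℝ} (hb : 0 < b) (hα : 0 ≤ α) {f g : ℝ → ℝ}
    (hf : IntegrableOn f (Icc 0 b) volume) (hg : IntegrableOn g (Icc 0 b) volume) :
    RL α (fun t => f t - g t) =ᵐ[volume.restrict (Icc 0 b)] fun t => RL α f t - RL α g t := by
  have := RL_add hb hα hf (hg.const_mul (-1))
  have e : (fun t => f t - g t) = fun t => f t + -1 * g t := by funext t; ring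
  rw [e]
  filter_upwards [this] with t ht
  rw [ht, RL_smul]; ring

lemma RL_inj {b α : ℝ} (hb : 0 < b) (hα : 0 ≤ α) {f g : ℝ → ℝ}
    (hf : IntegrableOn f (Icc 0 b) volume) (hg : IntegrableOn g (Icc 0 b) volume)
    (h : RL α f =ᵐ[volume.restrict (Icc 0 b)] RL α g) :
    f =ᵐ[volume.restrict (Icc 0 b)] g := by
  have := RL_inj0 hb hα (hf.sub hg) (by
    filter_upwards [RL_sub hb hα hf hg, h] with t h1 h2
    have h1 : RL α (f - g) t = _ := h1
    rw [h1, h2, sub_self])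
  filter_upwards [this] with t ht
  exact sub_eq_zero.1 ht

lemma RL_sum {b α : ℝ} (hb : 0 < b) (hα : 0 ≤ α) {ι : Type*} (S : Finset ι) {f : ι → ℝ → ℝ}
    (hf : ∀ i ∈ S, IntegrableOn (f i) (Icc 0 b) volume) :
    RL α (fun t => ∑ i ∈ S, f i t) =ᵐ[volume.restrict (Icc 0 b)] fun t => ∑ i ∈ S, RL α (f i) t := by
  classical
  induction S using Finset.induction_on with
  | empty => simp only [Finset.sum_empty]; exact Eventually.of_forall fun t => RL_zero_fun _ t
  | insert a S ha ih =>
    simp only [Finset.sum_insert ha]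
    have h1 : IntegrableOn (fun t => ∑ i ∈ S, f i t) (Icc 0 b) volume :=
      integrable_finsetSum _ fun i hi => hf i (Finset.mem_insert_of_mem hi)
    filter_upwards [RL_add hb hα (hf a (Finset.mem_insert_self _ _)) h1,
      ih fun i hi => hf i (Finset.mem_insert_of_mem hi)] with t h2 h3
    rw [h2, h3]

lemma RL_sum_pow {b α : ℝ} (hb : 0 < b) (hα : 0 ≤ α) {ι : Type*} (S : Finset ι) (a γ : ι → ℝ)
    (hγ : ∀ i ∈ S, -1 < γ i) :
    RL α (fun t => ∑ i ∈ S, a i * t ^ γ i) =ᵐ[volume.restrict (Icc 0 b)]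
      fun t => ∑ i ∈ S, (a i * (Real.Gamma (γ i + 1) / Real.Gamma (γ i + 1 + α))) * t ^ (γ i + α) := by
  filter_upwards [RL_sum hb hα S (f := fun i t => a i * t ^ γ i)
    fun i hi => (pow_int hb (hγ i hi)).const_mul (a i), ae_mem_Ioc] with t h1 h2
  rw [h1]
  refine Finset.sum_congr rfl fun i hi => ?_
  rw [RL_smul, RL_pow hα (hγ i hi) h2.1]; ring

lemma sum_pow_int {b : ℝ} (hb : 0 < b) {ι : Type*} (S : Finset ι) (a γ : ι → ℝ)
    (hγ : ∀ i ∈ S, -1 < γ i) :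
    IntegrableOn (fun t => ∑ i ∈ S, a i * t ^ γ i) (Icc 0 b) volume :=
  integrable_finsetSum _ fun i hi => (pow_int hb (hγ i hi)).const_mul (a i)

lemma MemAC.congr {b : ℝ} (hb : 0 < b) {f g : ℝ → ℝ} (h : EqOn f g (Icc 0 b)) (hf : MemAC b f) :
    MemAC b g := by
  obtain ⟨φ, h1, h2⟩ := hf
  refine ⟨φ, h1, fun t ht => ?_⟩
  rw [← h ht, ← h ⟨le_rfl, hb.le⟩, h2 t ht]

lemma MemACn_one {b : ℝ} (g : ℝ → ℝ) (hb : 0 < b) : MemACn b 1 g ↔ MemAC b g := by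
  constructor
  · rintro ⟨_, h⟩; simpa using h
  · intro h
    refine ⟨?_, by simpa using h⟩
    obtain ⟨φ, h1, h2⟩ := h
    simp only [Nat.sub_self, Nat.cast_zero, contDiffOn_zero]
    have := intervalIntegral.continuousOn_primitive_interval (f := φ) (μ := volume) (a := 0) (b := b)
        (by rwa [uIcc_of_le hb.le])
    rw [uIcc_of_le hb.le] at this
    exact (continuousOn_const.add this).congr h2

lemma MemACn.cont {b : ℝ} {m : ℕ} {g : ℝ → ℝ} (h : MemACn b m g) : ContinuousOn g (Icc 0 b) :=
  h.1.continuousOn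

lemma MemACn_succ {b : ℝ} (hb : 0 < b) (m : ℕ) (G : ℝ → ℝ) :
    MemACn b (m + 2) G ↔ ∃ G', MemACn b (m + 1) G' ∧
      ∀ t ∈ Icc (0:ℝ) b, G t = G 0 + ∫ s in (0:ℝ)..t, G' s := by
  have hu : UniqueDiffOn ℝ (Icc 0 b) := uniqueDiffOn_Icc hb
  have key : ContDiffOn ℝ ((m + 1 : ℕ)) G (Icc 0 b) ↔
      DifferentiableOn ℝ G (Icc 0 b) ∧ ContDiffOn ℝ (m : ℕ) (derivWithin G (Icc 0 b)) (Icc 0 b) := by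
    push_cast
    rw [contDiffOn_succ_iff_derivWithin hu]
    simp
  constructor
  · rintro ⟨h1, h2⟩
    simp only [show m + 2 - 1 = m + 1 from rfl] at h1 h2
    rw [iteratedDerivWithin_succ'] at h2
    rw [key] at h1
    refine ⟨derivWithin G (Icc 0 b), ⟨h1.2, h2⟩, fun t ht => ?_⟩
    have hs : Icc 0 t ⊆ Icc 0 b := Icc_subset_Icc_right ht.2
    rw [intervalIntegral.integral_eq_sub_of_hasDerivAt_of_le ht.1 (h1.1.continuousOn.mono hs)]
    · ring
    · intro x hx
      have : x ∈ Ioo 0 b := ⟨hx.1, hx.2.trans_le ht.2⟩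
      exact ((h1.1 x (Ioo_subset_Icc_self this)).hasDerivWithinAt).hasDerivAt
        (Icc_mem_nhds this.1 this.2)
    · apply ContinuousOn.intervalIntegrable
      rw [uIcc_of_le ht.1]
      exact h1.2.continuousOn.mono hs
  · rintro ⟨G', hG', h⟩
    let E := IccExtend hb.le (domRestrict (Icc 0 b) G')
    have hE : Continuous E := (continuousOn_iff_continuous_domRestrict.1 hG'.cont).Icc_extend'
    have hEe : ∀ x ∈ Icc 0 b, E x = G' x := fun x hx => IccExtend_of_mem _ _ hx
    have hd : ∀ t ∈ Icc 0 b, HasDerivWithinAt G (G' t) (Icc 0 b) t := by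
      intro t ht
      have h1 : HasDerivAt (fun t => G 0 + ∫ s in (0:ℝ)..t, E s) (E t) t :=
        (intervalIntegral.integral_hasDerivAt_right (hE.intervalIntegrable _ _)
          (hE.stronglyMeasurableAtFilter _ _) hE.continuousAt).const_add _
      rw [← hEe t ht]
      have e : ∀ x ∈ Icc 0 b, G x = G 0 + ∫ s in (0:ℝ)..x, E s := by
        intro x hx
        rw [h x hx]
        congr 1
        apply intervalIntegral.integral_congr
        intro s hs
        rw [uIcc_of_le hx.1] at hs
        exact (hEe s ⟨hs.1, hs.2.trans hx.2⟩).symm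
      exact h1.hasDerivWithinAt.congr e (e t ht)
    have hde : EqOn (derivWithin G (Icc 0 b)) G' (Icc 0 b) := fun t ht =>
      (hd t ht).derivWithin (hu t ht)
    refine ⟨key.2 ⟨fun t ht => (hd t ht).differentiableWithinAt, hG'.1.congr hde⟩, ?_⟩
    simp only [show m + 2 - 1 = m + 1 from rfl]
    rw [iteratedDerivWithin_succ']
    refine MemAC.congr hb ?_ hG'.2
    exact fun t ht => (iteratedDerivWithin_congr hde ht).symm

def FRep (b α : ℝ) (N : ℕ) (f : ℝ → ℝ) : Prop :=
  ∃ (c : ℕ → ℝ) (g : ℝ → ℝ), IntegrableOn g (Icc 0 b) volume ∧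
    f =ᵐ[volume.restrict (Icc 0 b)]
      fun t => (∑ k ∈ Finset.Icc 1 N, c k * t ^ (α - (k:ℝ))) + RL α g t

noncomputable def rr (α v : ℝ) (k : ℕ) : ℝ :=
  Real.Gamma (α - k + 1) / Real.Gamma (α - k + 1 + v)

lemma rr_pos {α v : ℝ} {N k : ℕ} (hN : (N:ℝ) < α + 1) (hv : 0 ≤ v) (hk : k ∈ Finset.Icc 1 N) :
    rr α v k ≠ 0 := by
  have h : (k:ℝ) ≤ N := by exact_mod_cast (Finset.mem_Icc.1 hk).2
  exact (div_pos (Real.Gamma_pos_of_pos (by linarith)) (Real.Gamma_pos_of_pos (by linarith))).ne'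

lemma Rep_exp {α : ℝ} {N k : ℕ} (hN : (N:ℝ) < α + 1) (hk : k ∈ Finset.Icc 1 N) :
    -1 < α - (k:ℝ) := by
  have h : (k:ℝ) ≤ N := by exact_mod_cast (Finset.mem_Icc.1 hk).2
  linarith

lemma RL_rep {b α v : ℝ} (hb : 0 < b) (hα : 0 ≤ α) (hv : 0 ≤ v) {N : ℕ} (hN : (N:ℝ) < α + 1)
    (c : ℕ → ℝ) {g : ℝ → ℝ} (hg : IntegrableOn g (Icc 0 b) volume) :
    RL v (fun t => (∑ k ∈ Finset.Icc 1 N, c k * t ^ (α - (k:ℝ))) + RL α g t)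
      =ᵐ[volume.restrict (Icc 0 b)]
      fun t => (∑ k ∈ Finset.Icc 1 N, (c k * rr α v k) * t ^ (α + v - (k:ℝ))) + RL (α + v) g t := by
  have hS := fun k hk => Rep_exp (k := k) hN hk
  filter_upwards [RL_add hb hv (sum_pow_int hb _ c _ hS) (RL_int hb hα hg), RL_RL hb hα hv hg,
    RL_sum_pow hb hv _ c _ hS] with t h1 h2 h3
  rw [h1, h2, h3]
  congr 1
  refine Finset.sum_congr rfl fun k _ => ?_
  rw [rr, sub_add_eq_add_sub α (k:ℝ) v]

lemma rep_int {b α : ℝ} (hb : 0 < b) (hα : 0 ≤ α) {N : ℕ} (hN : (N:ℝ) < α + 1)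
    (c : ℕ → ℝ) {g : ℝ → ℝ} (hg : IntegrableOn g (Icc 0 b) volume) :
    IntegrableOn (fun t => (∑ k ∈ Finset.Icc 1 N, c k * t ^ (α - (k:ℝ))) + RL α g t) (Icc 0 b)
      volume :=
  (sum_pow_int hb _ c _ fun k hk => Rep_exp (k := k) hN hk).add (RL_int hb hα hg)

lemma AC_fwd {b : ℝ} (hb : 0 < b) (m : ℕ) : ∀ G : ℝ → ℝ, MemACn b (m + 1) G →
    FRep b ((m + 1 : ℕ) : ℝ) (m + 1) G := by
  induction m with
  | zero =>
    intro G h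
    rw [zero_add, MemACn_one _ hb] at h
    obtain ⟨φ, h1, h2⟩ := h
    refine ⟨fun _ => G 0, φ, h1, ae_Icc fun t ht => ?_⟩
    rw [h2 t (Ioc_subset_Icc_self ht)]
    simp [RL_one]
  | succ m ih =>
    intro G h
    obtain ⟨G', h1, h2⟩ := (MemACn_succ hb m G).1 h
    obtain ⟨c, g, hg, h3⟩ := ih G' h1
    have h4 := RL_rep hb (α := ((m + 1 : ℕ) : ℝ)) (v := 1) (by positivity) zero_le_one
      (N := m + 1) (by linarith) c hg
    refine ⟨fun k => if k = m + 2 then G 0 else c k * rr ((m + 1 : ℕ) : ℝ) 1 k, g, hg, ?_⟩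
    filter_upwards [h4, ae_mem_Ioc] with t h5 ht
    have ht' := Ioc_subset_Icc_self ht
    rw [h2 t ht', ← RL_one, RL_congr one_ne_zero h3 ht', h5,
      Finset.sum_Icc_succ_top (b := m + 1) (by omega)]
    have e : ((m + 1 + 1 : ℕ) : ℝ) = ((m + 1 : ℕ) : ℝ) + 1 := by push_cast; ring
    rw [← e, sub_self, Real.rpow_zero, if_pos rfl]
    have : ∀ k ∈ Finset.Icc 1 (m + 1),
        (if k = m + 2 then G 0 else c k * rr ((m + 1 : ℕ) : ℝ) 1 k) * t ^ (((m + 1 + 1 : ℕ) : ℝ) - k)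
        = (c k * rr ((m + 1 : ℕ) : ℝ) 1 k) * t ^ (((m + 1 + 1 : ℕ) : ℝ) - k) := by
      intro k hk
      rw [if_neg (by have := (Finset.mem_Icc.1 hk).2; omega)]
    rw [Finset.sum_congr rfl this]
    ring

lemma AC_bwd {b : ℝ} (hb : 0 < b) (m : ℕ) : ∀ F : ℝ → ℝ, FRep b ((m + 1 : ℕ) : ℝ) (m + 1) F →
    ∃ G, G =ᵐ[volume.restrict (Icc 0 b)] F ∧ MemACn b (m + 1) G := by
  induction m with
  | zero =>
    rintro F ⟨c, g, hg, h⟩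
    refine ⟨fun t => c 1 + ∫ s in (0:ℝ)..t, g s, ?_, ?_⟩
    · refine EventuallyEq.trans ?_ h.symm
      refine ae_Icc fun t ht => ?_
      simp [RL_one]
    · rw [zero_add, MemACn_one _ hb]
      exact ⟨g, hg, fun t ht => by simp⟩
  | succ m ih =>
    rintro F ⟨c, g, hg, h⟩
    have hN : ((m + 1 : ℕ) : ℝ) < ((m + 1 : ℕ) : ℝ) + 1 := by linarith
    obtain ⟨G', h1, h2⟩ := ih (fun t => (∑ k ∈ Finset.Icc 1 (m + 1),
      (c k / rr ((m + 1 : ℕ) : ℝ) 1 k) * t ^ (((m + 1 : ℕ) : ℝ) - (k:ℝ))) + RL ((m + 1 : ℕ) : ℝ) g t)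
      ⟨_, g, hg, EventuallyEq.rfl⟩
    have h4 := RL_rep hb (α := ((m + 1 : ℕ) : ℝ)) (v := 1) (by positivity) zero_le_one
      (N := m + 1) hN (fun k => c k / rr ((m + 1 : ℕ) : ℝ) 1 k) hg
    refine ⟨fun t => c (m + 2) + ∫ s in (0:ℝ)..t, G' s, ?_, ?_⟩
    · filter_upwards [h4, h, ae_mem_Ioc] with t h5 h6 ht
      have ht' := Ioc_subset_Icc_self ht
      rw [← RL_one, RL_congr one_ne_zero h1 ht', h5, h6, Finset.sum_Icc_succ_top (b := m + 1) (by omega)]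
      have e : ((m + 1 + 1 : ℕ) : ℝ) = ((m + 1 : ℕ) : ℝ) + 1 := by push_cast; ring
      rw [← e, sub_self, Real.rpow_zero]
      have : ∀ k ∈ Finset.Icc 1 (m + 1),
        (c k / rr ((m + 1 : ℕ) : ℝ) 1 k * rr ((m + 1 : ℕ) : ℝ) 1 k) * t ^ (((m + 1 + 1 : ℕ) : ℝ) - k)
        = c k * t ^ (((m + 1 + 1 : ℕ) : ℝ) - k) := by
        intro k hk
        rw [div_mul_cancel₀ _ (rr_pos hN zero_le_one hk)]
      rw [Finset.sum_congr rfl this]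
      ring
    · rw [MemACn_succ hb]
      exact ⟨G', h2, fun t ht => by simp⟩

lemma MemX_iff {b α : ℝ} (hb : 0 < b) (hα : 0 ≤ α) (f : ℝ → ℝ) :
    MemX b α f ↔ FRep b α ⌈α⌉₊ f := by
  rcases hα.eq_or_lt with rfl | hα'
  · constructor
    · rintro ⟨h, _⟩
      exact ⟨fun _ => 0, f, h, by simp [RL_zero]⟩
    · rintro ⟨c, g, hg, h⟩
      refine ⟨?_, by simp⟩
      simp only [Nat.ceil_zero, RL_zero, Finset.Icc_eq_empty_of_lt zero_lt_one, Finset.sum_empty,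
        zero_add] at h
      exact Integrable.congr hg h.symm
  have hN := Nat.ceil_lt_add_one hα
  have hv : 0 ≤ (⌈α⌉₊ : ℝ) - α := sub_nonneg.2 (Nat.le_ceil α)
  obtain ⟨m, hm⟩ : ∃ m, ⌈α⌉₊ = m + 1 := Nat.exists_eq_succ_of_ne_zero (Nat.ceil_pos.2 hα').ne'
  constructor
  · rintro ⟨hf, h⟩
    obtain ⟨G, h1, h2⟩ := h hα'.ne'
    have h3 := AC_fwd hb m G (hm ▸ h2)
    rw [← hm] at h3
    obtain ⟨c, g, hg, h4⟩ := h3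
    refine ⟨fun k => c k / rr α ((⌈α⌉₊ : ℝ) - α) k, g, hg, ?_⟩
    apply RL_inj hb hv hf (rep_int hb hα hN _ hg)
    filter_upwards [h1, h4, RL_rep hb hα hv hN (fun k => c k / rr α ((⌈α⌉₊ : ℝ) - α) k) hg]
      with t a1 a2 a3
    rw [← a1, a2, a3, add_sub_cancel]
    congr 1
    refine Finset.sum_congr rfl fun k hk => ?_
    rw [div_mul_cancel₀ _ (rr_pos hN hv hk)]
  · rintro ⟨c, g, hg, h⟩
    refine ⟨Integrable.congr (rep_int hb hα hN c hg) h.symm, fun _ => ?_⟩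
    have : FRep b ((m + 1 : ℕ) : ℝ) (m + 1) (RL ((⌈α⌉₊ : ℝ) - α) f) := by
      rw [← hm]
      refine ⟨fun k => c k * rr α ((⌈α⌉₊ : ℝ) - α) k, g, hg, (RL_congr_ae h).trans ?_⟩
      · have := RL_rep hb hα hv hN c hg
        rw [add_sub_cancel] at this
        exact this
    rw [hm] at this ⊢
    exact AC_bwd hb m _ this

def InI (b α : ℝ) (f : ℝ → ℝ) : Prop :=
  ∃ g : ℝ → ℝ, IntegrableOn g (Icc 0 b) volume ∧ f =ᵐ[volume.restrict (Icc 0 b)] RL α g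

lemma InI.add {b α : ℝ} (hb : 0 < b) (hα : 0 ≤ α) {f g : ℝ → ℝ} (hf : InI b α f) (hg : InI b α g) :
    InI b α (fun t => f t + g t) := by
  obtain ⟨u, hu, hu'⟩ := hf
  obtain ⟨v, hv, hv'⟩ := hg
  refine ⟨_, hu.add hv, ?_⟩
  filter_upwards [hu', hv', RL_add hb hα hu hv] with t h1 h2 h3
  rw [h1, h2]; exact h3.symm

lemma InI.smul {b α : ℝ} {f : ℝ → ℝ} (c : ℝ) (hf : InI b α f) : InI b α (fun t => c * f t) := by
  obtain ⟨u, hu, hu'⟩ := hf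
  refine ⟨_, hu.const_mul c, ?_⟩
  filter_upwards [hu'] with t h1
  rw [h1, RL_smul]

lemma InI.zero {b α : ℝ} : InI b α (fun _ => 0) :=
  ⟨fun _ => 0, by simp, Eventually.of_forall fun t => (RL_zero_fun _ t).symm⟩

lemma InI.sum {b α : ℝ} (hb : 0 < b) (hα : 0 ≤ α) {ι : Type*} (S : Finset ι) {f : ι → ℝ → ℝ}
    (h : ∀ i ∈ S, InI b α (f i)) : InI b α (fun t => ∑ i ∈ S, f i t) := by
  classical
  induction S using Finset.induction_on with
  | empty => simpa using InI.zero
  | insert a S ha ih =>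
    simp only [Finset.sum_insert ha]
    exact (h a (Finset.mem_insert_self _ _)).add hb hα
      (ih fun i hi => h i (Finset.mem_insert_of_mem hi))

lemma InI.pow {b α γ : ℝ} (hb : 0 < b) (hα : 0 ≤ α) (h : α - 1 < γ) :
    InI b α (fun t => t ^ γ) := by
  have h1 : -1 < γ - α := by linarith
  refine ⟨fun t => (Real.Gamma (γ - α + 1) / Real.Gamma (γ - α + 1 + α))⁻¹ * t ^ (γ - α),
    (pow_int hb h1).const_mul _, ae_Icc fun t ht => ?_⟩
  rw [RL_smul, RL_pow hα h1 ht.1, sub_add_cancel, ← mul_assoc, inv_mul_cancel₀, one_mul]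
  exact (div_pos (Real.Gamma_pos_of_pos (by linarith)) (Real.Gamma_pos_of_pos (by linarith))).ne'

lemma InI.RL {b α α' : ℝ} (hb : 0 < b) (hα : 0 ≤ α) (h : α ≤ α') {g : ℝ → ℝ}
    (hg : IntegrableOn g (Icc 0 b) volume) : InI b α (RL α' g) := by
  refine ⟨_root_.RL (α' - α) g, RL_int hb (by linarith) hg, ?_⟩
  have := RL_RL hb (u := α' - α) (v := α) (by linarith) hα hg
  rw [sub_add_cancel] at this
  exact this.symm

lemma InI.congr {b α : ℝ} {f g : ℝ → ℝ} (hf : InI b α f)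
    (h : f =ᵐ[volume.restrict (Icc 0 b)] g) : InI b α g := by
  obtain ⟨u, hu, hu'⟩ := hf
  exact ⟨u, hu, h.symm.trans hu'⟩

lemma Rep_iff {b α : ℝ} {N : ℕ} {f : ℝ → ℝ} : FRep b α N f ↔ ∃ c : ℕ → ℝ, InI b α
    (fun t => f t - ∑ k ∈ Finset.Icc 1 N, c k * t ^ (α - (k:ℝ))) := by
  constructor
  · rintro ⟨c, g, hg, h⟩
    refine ⟨c, g, hg, ?_⟩
    filter_upwards [h] with t ht
    rw [ht]; ring
  · rintro ⟨c, g, hg, h⟩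
    refine ⟨c, g, hg, ?_⟩
    filter_upwards [h] with t ht
    rw [← ht]; ring

lemma RL_small {b α : ℝ} (hb : 0 < b) (hα : 1 ≤ α) {h : ℝ → ℝ}
    (hh : IntegrableOn h (Icc 0 b) volume) :
    Tendsto (fun t => RL α h t * t ^ (-(α - 1))) (𝓝[>] 0) (𝓝 0) := by
  have hG := Real.Gamma_pos_of_pos (by linarith : 0 < α)
  have hc := intervalIntegral.continuousOn_primitive_interval (f := fun s => |h s|) (μ := volume)
    (a := 0) (b := b) (by rw [uIcc_of_le hb.le]; exact hh.abs)
  rw [uIcc_of_le hb.le] at hc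
  have h1 : Tendsto (fun t => ∫ s in (0:ℝ)..t, |h s|) (𝓝[>] 0) (𝓝 0) := by
    have := hc 0 ⟨le_rfl, hb.le⟩
    unfold ContinuousWithinAt at this
    simp only [intervalIntegral.integral_same] at this
    refine this.mono_left ?_
    rw [← nhdsWithin_Ioc_eq_nhdsGT hb]
    exact nhdsWithin_mono _ Ioc_subset_Icc_self
  have h2 : Tendsto (fun t => (1 / Real.Gamma α) * ∫ s in (0:ℝ)..t, |h s|) (𝓝[>] 0) (𝓝 0) := by
    simpa using h1.const_mul (1 / Real.Gamma α)
  refine squeeze_zero_norm' ?_ h2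
  filter_upwards [Ioc_mem_nhdsGT hb] with t ht
  have hi : IntervalIntegrable h volume 0 t :=
    (intervalIntegrable_iff_integrableOn_Icc_of_le ht.1.le).2
      (hh.mono_set (Icc_subset_Icc_right ht.2))
  have hp : 0 < t ^ (-(α - 1)) := Real.rpow_pos_of_pos ht.1 _
  rw [RL, if_neg (by linarith), norm_mul, norm_mul, Real.norm_of_nonneg hp.le,
    Real.norm_of_nonneg (by positivity : 0 ≤ 1 / Real.Gamma α), mul_assoc]
  refine mul_le_mul_of_nonneg_left ?_ (by positivity)
  have h3 : ‖∫ s in (0:ℝ)..t, (t - s) ^ (α - 1) * h s‖ ≤ ∫ s in (0:ℝ)..t, t ^ (α - 1) * |h s| := by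
    apply intervalIntegral.norm_integral_le_of_norm_le ht.1.le
    · refine Eventually.of_forall fun s hs => ?_
      rw [norm_mul, Real.norm_eq_abs (h s)]
      refine mul_le_mul_of_nonneg_right ?_ (abs_nonneg _)
      rw [Real.norm_of_nonneg (Real.rpow_nonneg (by linarith [hs.2]) _)]
      exact Real.rpow_le_rpow (by linarith [hs.2]) (by linarith [hs.1]) (by linarith)
    · exact hi.abs.const_mul _
  rw [intervalIntegral.integral_const_mul] at h3
  calc _ ≤ (t ^ (α - 1) * ∫ s in (0:ℝ)..t, |h s|) * t ^ (-(α - 1)) :=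
        mul_le_mul_of_nonneg_right h3 hp.le
    _ = _ := by
      rw [mul_right_comm, ← Real.rpow_add ht.1]; simp

lemma pow_lim {L : Filter ℝ} (hL : L ≤ 𝓝[>] 0) {p : ℝ} (hp : 0 ≤ p) :
    Tendsto (fun t : ℝ => t ^ p) L (𝓝 (0 ^ p)) :=
  ((Real.continuousAt_rpow_const 0 p (Or.inr hp)).tendsto.mono_left nhdsWithin_le_nhds).mono_left hL

lemma lin_indep {L : Filter ℝ} [L.NeBot] (hL : L ≤ 𝓝[>] 0) {ι : Type*} (S : Finset ι)
    (a γ : ι → ℝ) (hinj : ∀ i ∈ S, ∀ j ∈ S, γ i = γ j → i = j) {δ : ℝ} (hδ : ∀ i ∈ S, γ i ≤ δ)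
    (h : Tendsto (fun t => (∑ i ∈ S, a i * t ^ γ i) * t ^ (-δ)) L (𝓝 0)) :
    ∀ i ∈ S, a i = 0 := by
  classical
  by_contra! hne
  obtain ⟨i1, hi1, hne1⟩ := hne
  set S' := S.filter (fun i => a i ≠ 0) with hS'
  obtain ⟨i0, hi0, hmin⟩ := Finset.exists_min_image S' γ ⟨i1, by simp [hS', hi1, hne1]⟩
  have hi0S : i0 ∈ S := (Finset.mem_filter.1 hi0).1
  have h1 : Tendsto (fun t : ℝ => ∑ i ∈ S', a i * t ^ (γ i - γ i0)) L
      (𝓝 (∑ i ∈ S', a i * 0 ^ (γ i - γ i0))) :=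
    tendsto_finsetSum _ fun i hi => (pow_lim hL (sub_nonneg.2 (hmin i hi))).const_mul _
  have h2 : ∑ i ∈ S', a i * (0:ℝ) ^ (γ i - γ i0) = a i0 := by
    rw [Finset.sum_eq_single_of_mem i0 hi0]
    · simp
    · intro i hi hii
      rw [Real.zero_rpow, mul_zero]
      intro h0
      exact hii (hinj i (Finset.mem_filter.1 hi).1 i0 hi0S (sub_eq_zero.1 h0))
  have h3 := h.mul (pow_lim hL (sub_nonneg.2 (hδ i0 hi0S)))
  rw [zero_mul] at h3
  have h4 : Tendsto (fun t : ℝ => ∑ i ∈ S', a i * t ^ (γ i - γ i0)) L (𝓝 0) := by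
    refine h3.congr' ?_
    filter_upwards [hL self_mem_nhdsWithin] with t ht
    have ht : 0 < t := ht
    rw [mul_assoc, ← Real.rpow_add ht, hS', Finset.sum_filter_of_ne, Finset.sum_mul]
    · refine Finset.sum_congr rfl fun i _ => ?_
      rw [mul_assoc, ← Real.rpow_add ht]
      congr 2; ring
    · intro i _ hi h0
      exact hi (by rw [h0, zero_mul])
  rw [h2] at h1
  exact (Finset.mem_filter.1 hi0).2 (tendsto_nhds_unique h1 h4)

lemma L_neBot {b : ℝ} (hb : 0 < b) : (ae (volume.restrict (Icc (0:ℝ) b)) ⊓ 𝓝[>] 0).NeBot := by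
  rw [inf_neBot_iff]
  intro s hs s' hs'
  obtain ⟨c, hc, hcs⟩ := mem_nhdsGT_iff_exists_Ioo_subset.1 hs'
  have hc : 0 < c := hc
  by_contra hempty
  rw [not_nonempty_iff_eq_empty] at hempty
  have h1 : Ioo 0 (min c b) ⊆ sᶜ := fun x hx hxs => by
    have : x ∈ s ∩ s' := ⟨hxs, hcs ⟨hx.1, hx.2.trans_le (min_le_left _ _)⟩⟩
    rw [hempty] at this; exact this
  have h2 : (volume.restrict (Icc (0:ℝ) b)) (Ioo 0 (min c b)) = 0 := measure_mono_null h1 hs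
  rw [Measure.restrict_apply measurableSet_Ioo, inter_eq_left.2, Real.volume_Ioo] at h2
  · simp at h2
    rcases h2 with h2 | h2 <;> linarith
  · exact fun x hx => ⟨hx.1.le, hx.2.le.trans (min_le_right _ _)⟩

lemma no_pow {b α : ℝ} (hb : 0 < b) (hα : 0 ≤ α) {ι : Type*} (S : Finset ι)
    (a γ : ι → ℝ) (hinj : ∀ i ∈ S, ∀ j ∈ S, γ i = γ j → i = j) (hγ : ∀ i ∈ S, -1 < γ i)
    (hδ : ∀ i ∈ S, γ i ≤ α - 1) (h : InI b α (fun t => ∑ i ∈ S, a i * t ^ γ i)) :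
    ∀ i ∈ S, a i = 0 := by
  obtain ⟨g, hg, h⟩ := h
  have := L_neBot hb
  have key := lin_indep (L := ae (volume.restrict (Icc (0:ℝ) b)) ⊓ 𝓝[>] 0) inf_le_right S
    (fun i => a i * (Real.Gamma (γ i + 1) / Real.Gamma (γ i + 1 + 1))) (fun i => γ i + 1)
    (fun i hi j hj hij => hinj i hi j hj (by linarith)) (δ := α)
    (fun i hi => by linarith [hδ i hi]) (by
      have h1 := (RL_small hb (α := α + 1) (by linarith) hg).mono_left
        (inf_le_right : ae (volume.restrict (Icc (0:ℝ) b)) ⊓ 𝓝[>] 0 ≤ _)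
      refine h1.congr' ?_
      have h2 : RL (α + 1) g =ᵐ[volume.restrict (Icc 0 b)] fun t => ∑ i ∈ S,
          (a i * (Real.Gamma (γ i + 1) / Real.Gamma (γ i + 1 + 1))) * t ^ (γ i + 1) :=
        (RL_RL hb hα zero_le_one hg).symm.trans ((RL_congr_ae h.symm).trans
          (RL_sum_pow hb zero_le_one S a γ hγ))
      have h3 := Filter.Eventually.filter_mono
        (inf_le_left : ae (volume.restrict (Icc (0:ℝ) b)) ⊓ 𝓝[>] 0 ≤ _) h2
      filter_upwards [h3] with t ht
      rw [ht]; simp)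
  intro i hi
  have h1 := key i hi
  have h2 : 0 < Real.Gamma (γ i + 1) / Real.Gamma (γ i + 1 + 1) :=
    div_pos (Real.Gamma_pos_of_pos (by linarith [hγ i hi]))
      (Real.Gamma_pos_of_pos (by linarith [hγ i hi]))
  exact (mul_eq_zero.1 h1).resolve_right h2.ne'

lemma FRep.add {b α : ℝ} (hb : 0 < b) (hα : 0 ≤ α) {N : ℕ} {f g : ℝ → ℝ} (hf : FRep b α N f)
    (hg : FRep b α N g) : FRep b α N (fun t => f t + g t) := by
  rw [Rep_iff] at *
  obtain ⟨c, hc⟩ := hf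
  obtain ⟨d, hd⟩ := hg
  refine ⟨fun k => c k + d k, (hc.add hb hα hd).congr (Eventually.of_forall fun t => ?_)⟩
  simp only [add_mul, Finset.sum_add_distrib]
  ring

lemma InI.rep {b α : ℝ} {N : ℕ} {f : ℝ → ℝ} (hf : InI b α f) : FRep b α N f := by
  rw [Rep_iff]
  exact ⟨fun _ => 0, by simpa using hf⟩

lemma FRep.smul {b α : ℝ} {N : ℕ} {f : ℝ → ℝ} (a : ℝ) (hf : FRep b α N f) :
    FRep b α N (fun t => a * f t) := by
  rw [Rep_iff] at *
  obtain ⟨c, hc⟩ := hf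
  refine ⟨fun k => a * c k, (hc.smul a).congr (Eventually.of_forall fun t => ?_)⟩
  simp only [mul_sub, Finset.mul_sum, mul_assoc]

lemma FRep.sum {b α : ℝ} (hb : 0 < b) (hα : 0 ≤ α) {N : ℕ} {ι : Type*} (S : Finset ι)
    {f : ι → ℝ → ℝ} (h : ∀ i ∈ S, FRep b α N (f i)) : FRep b α N (fun t => ∑ i ∈ S, f i t) := by
  classical
  induction S using Finset.induction_on with
  | empty => simpa using InI.zero.rep
  | insert a S ha ih =>
    simp only [Finset.sum_insert ha]
    exact (h a (Finset.mem_insert_self _ _)).add hb hα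
      (ih fun i hi => h i (Finset.mem_insert_of_mem hi))

lemma FRep.pow {b α : ℝ} {N k : ℕ} (hk : k ∈ Finset.Icc 1 N) :
    FRep b α N (fun t => t ^ (α - (k:ℝ))) := by
  rw [Rep_iff]
  refine ⟨fun j => if j = k then 1 else 0, InI.zero.congr (Eventually.of_forall fun t => ?_)⟩
  simp only [ite_mul, one_mul, zero_mul, Finset.sum_ite_eq', if_pos hk, sub_self]

/-- key elimination step -/
lemma elim_step {b α δ : ℝ} (hb : 0 < b) (hδ : 0 ≤ δ) (hlt : δ < α)
    (hni : ∀ z : ℤ, α - δ ≠ (z:ℝ)) {f : ℝ → ℝ} {c : ℕ → ℝ} {g : ℝ → ℝ}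
    (hg : IntegrableOn g (Icc 0 b) volume)
    (h1 : f =ᵐ[volume.restrict (Icc 0 b)]
      fun t => (∑ k ∈ Finset.Icc 1 ⌈α⌉₊, c k * t ^ (α - (k:ℝ))) + RL α g t)
    (h2 : FRep b δ ⌈δ⌉₊ f) :
    ∀ k ∈ Finset.Icc 1 ⌈α⌉₊, ⌈α - δ⌉₊ < k → c k = 0 := by
  rw [Rep_iff] at h2
  obtain ⟨d, hd⟩ := h2
  have hα : 0 ≤ α := by linarith
  set S1 := (Finset.Icc 1 ⌈α⌉₊).filter (fun k => ⌈α - δ⌉₊ < k) with hS1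
  set S2 := (Finset.Icc 1 ⌈α⌉₊).filter (fun k => ¬ ⌈α - δ⌉₊ < k) with hS2
  set T := Finset.Icc 1 ⌈δ⌉₊ with hT
  have hsmall : ∀ k ∈ S2, InI b δ (fun t => -c k * t ^ (α - (k:ℝ))) := by
    intro k hk
    apply InI.smul
    apply InI.pow hb hδ
    have hk' := (Finset.mem_filter.1 hk).2
    have h3 : (k:ℝ) ≤ ⌈α - δ⌉₊ := by exact_mod_cast not_lt.1 hk'
    have h4 := Nat.ceil_lt_add_one (by linarith : 0 ≤ α - δ)
    linarith
  have hin : InI b δ (fun t => ∑ i ∈ S1.disjSum T,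
      (Sum.elim c (fun k => - d k) i) * t ^ (Sum.elim (fun k : ℕ => α - (k:ℝ)) (fun k : ℕ => δ - (k:ℝ)) i)) := by
    refine ((hd.add hb hδ (InI.sum hb hδ S2 hsmall)).add hb hδ
      ((InI.RL hb hδ hlt.le hg).smul (-1))).congr ?_
    filter_upwards [h1] with t ht
    rw [ht, Finset.sum_disjSum, ← Finset.sum_filter_add_sum_filter_not (Finset.Icc 1 ⌈α⌉₊)
      (fun k => ⌈α - δ⌉₊ < k)]
    simp only [Sum.elim_inl, Sum.elim_inr, neg_mul, Finset.sum_neg_distrib]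
    ring
  have key := no_pow hb hδ _ _ _ ?_ ?_ ?_ hin
  · intro k hk hk'
    exact key (Sum.inl k) (by simp [hS1]; exact ⟨Finset.mem_Icc.1 hk, hk'⟩)
  · have hz : ∀ j k : ℕ, α - (j:ℝ) ≠ δ - (k:ℝ) := by
      intro j k h
      apply hni ((j:ℤ) - k)
      push_cast; linarith
    rintro (i | i) - (j | j) - hij
    · simp only [Sum.elim_inl] at hij
      congr 1; exact_mod_cast (by linarith : (i:ℝ) = j)
    · exact absurd hij (hz i j)
    · exact absurd hij.symm (hz j i)
    · simp only [Sum.elim_inr] at hij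
      congr 1; exact_mod_cast (by linarith : (i:ℝ) = j)
  · rintro (i | i) hi
    · have hi := (Finset.mem_filter.1 (Finset.inl_mem_disjSum.1 hi)).1
      exact Rep_exp (Nat.ceil_lt_add_one hα) hi
    · exact Rep_exp (Nat.ceil_lt_add_one hδ) (Finset.inr_mem_disjSum.1 hi)
  · rintro (i | i) hi
    · have hi := (Finset.mem_filter.1 (Finset.inl_mem_disjSum.1 hi)).2
      have h3 : ((⌈α - δ⌉₊ + 1 : ℕ) : ℝ) ≤ i := by exact_mod_cast hi
      have h4 := Nat.le_ceil (α - δ)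
      push_cast at h3
      simp only [Sum.elim_inl]; linarith
    · have hi := (Finset.mem_Icc.1 (Finset.inr_mem_disjSum.1 hi)).1
      have h3 : (1 : ℝ) ≤ i := by exact_mod_cast hi
      simp only [Sum.elim_inr]; linarith

/-- Structure of the intersection of summable-derivative spaces: for
`β_n > ⋯ > β_1 ≥ 0` and `β_*` the greatest `β_j` (`j < n`) with `β_n - β_j ∉ ℤ`
(`β_* = 0` if none exists),
`X_{β_1} ∩ ⋯ ∩ X_{β_n} = ⟨t^{β_n-⌈β_n-β_*⌉}, …, t^{β_n-1}⟩ ⊕ I^{β_n}(L¹[0,b])`: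
every `f` in the intersection decomposes (uniquely, in `L¹[0,b]`) as such a sum, and
conversely every such sum lies in the intersection; in particular `I^{β_n}(L¹[0,b])`
is contained in the intersection, with codimension `⌈β_n-β_*⌉`. -/
theorem inter_X_structure (b : ℝ) (hb : 0 < b) (n : ℕ) (hn : 1 ≤ n) (β : ℕ → ℝ)
    (hmono : ∀ i j : ℕ, 1 ≤ i → i < j → j ≤ n → β i < β j) (hβ1 : 0 ≤ β 1)
    (βstar : ℝ)
    (hstar :
      IsGreatest {x : ℝ | ∃ j, 1 ≤ j ∧ j < n ∧ x = β j ∧ ∀ z : ℤ, β n - β j ≠ (z:ℝ)} βstar ∨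
      ({x : ℝ | ∃ j, 1 ≤ j ∧ j < n ∧ x = β j ∧ ∀ z : ℤ, β n - β j ≠ (z:ℝ)} = ∅ ∧ βstar = 0)) :
    (∀ f : ℝ → ℝ, (∀ j, 1 ≤ j → j ≤ n → MemX b (β j) f) →
      ∃ (cc : ℕ → ℝ) (g : ℝ → ℝ), IntegrableOn g (Set.Icc 0 b) volume ∧
        f =ᵐ[volume.restrict (Set.Icc 0 b)]
          fun t => (∑ k ∈ Finset.Icc 1 ⌈β n - βstar⌉₊, cc k * t ^ (β n - (k:ℝ)))
            + RL (β n) g t) ∧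
    (∀ (cc : ℕ → ℝ) (g : ℝ → ℝ), IntegrableOn g (Set.Icc 0 b) volume →
      ∀ j, 1 ≤ j → j ≤ n →
        MemX b (β j)
          (fun t => (∑ k ∈ Finset.Icc 1 ⌈β n - βstar⌉₊, cc k * t ^ (β n - (k:ℝ)))
            + RL (β n) g t)) ∧
    (∀ (cc cc' : ℕ → ℝ) (g g' : ℝ → ℝ),
      IntegrableOn g (Set.Icc 0 b) volume → IntegrableOn g' (Set.Icc 0 b) volume →
      (fun t => (∑ k ∈ Finset.Icc 1 ⌈β n - βstar⌉₊, cc k * t ^ (β n - (k:ℝ)))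
          + RL (β n) g t)
        =ᵐ[volume.restrict (Set.Icc 0 b)]
        (fun t => (∑ k ∈ Finset.Icc 1 ⌈β n - βstar⌉₊, cc' k * t ^ (β n - (k:ℝ)))
          + RL (β n) g' t) →
      (∀ k ∈ Finset.Icc 1 ⌈β n - βstar⌉₊, cc k = cc' k) ∧
        g =ᵐ[volume.restrict (Set.Icc 0 b)] g') := by
  have hpos : ∀ j, 1 ≤ j → j ≤ n → 0 ≤ β j := by
    intro j h1 h2
    rcases h1.eq_or_lt with rfl | h
    · exact hβ1
    · exact hβ1.trans (hmono 1 j le_rfl h h2).le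
  have hn0 := hpos n hn le_rfl
  have hs0 : 0 ≤ βstar ∧ βstar ≤ β n := by
    rcases hstar with ⟨⟨j, h1, h2, rfl, _⟩, _⟩ | ⟨_, rfl⟩
    · exact ⟨hpos j h1 h2.le, (hmono j n h1 h2 le_rfl).le⟩
    · exact ⟨le_rfl, hn0⟩
  have hK : ⌈β n - βstar⌉₊ ≤ ⌈β n⌉₊ := Nat.ceil_mono (by linarith [hs0.1])
  have hKlt : ((⌈β n - βstar⌉₊ : ℕ) : ℝ) < β n + 1 :=
    lt_of_le_of_lt (by exact_mod_cast hK) (Nat.ceil_lt_add_one hn0)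
  refine ⟨?_, ?_, ?_⟩
  · intro f hf
    obtain ⟨c, g, hg, h⟩ := (MemX_iff hb hn0 f).1 (hf n hn le_rfl)
    refine ⟨c, g, hg, ?_⟩
    have hz : ∀ k ∈ Finset.Icc 1 ⌈β n⌉₊, ⌈β n - βstar⌉₊ < k → c k = 0 := by
      rcases hstar with ⟨⟨j, h1, h2, rfl, hni⟩, _⟩ | ⟨_, rfl⟩
      · exact elim_step hb hs0.1 (hmono j n h1 h2 le_rfl) hni hg h
          ((MemX_iff hb hs0.1 f).1 (hf j h1 h2.le))
      · intro k hk hk'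
        rw [sub_zero] at hk'
        exact absurd (Finset.mem_Icc.1 hk).2 (not_le.2 hk')
    filter_upwards [h] with t ht
    rw [ht]
    congr 1
    symm
    apply Finset.sum_subset (Finset.Icc_subset_Icc_right hK)
    intro k hk hk'
    rw [hz k hk, zero_mul]
    by_contra hlt
    exact hk' (Finset.mem_Icc.2 ⟨(Finset.mem_Icc.1 hk).1, not_lt.1 hlt⟩)
  · intro cc g hg j hj1 hj2
    have hj0 := hpos j hj1 hj2
    have hjn : β j ≤ β n := by
      rcases hj2.eq_or_lt with rfl | h
      · exact le_rfl
      · exact (hmono j n hj1 h le_rfl).le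
    rw [MemX_iff hb hj0]
    refine FRep.add hb hj0 (FRep.sum hb hj0 _ fun k hk => FRep.smul _ ?_)
      (InI.RL hb hj0 hjn hg).rep
    rcases lt_or_ge (β j - 1) (β n - k) with hlt | hge
    · exact (InI.pow hb hj0 hlt).rep
    · have hk1 := (Finset.mem_Icc.1 hk).1
      have hk2 := (Finset.mem_Icc.1 hk).2
      have hint : ∃ z : ℤ, β n - β j = z := by
        by_contra! hni
        have hjlt : j < n := by
          rcases hj2.eq_or_lt with rfl | h
          · exact absurd (sub_self (β j)) (by simpa using hni 0)
          · exact h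
        rcases hstar with ⟨_, hub⟩ | ⟨he, _⟩
        · have h1 : β j ≤ βstar := hub ⟨j, hj1, hjlt, rfl, hni⟩
          have h2 : (k:ℝ) ≤ ⌈β n - βstar⌉₊ := by exact_mod_cast hk2
          have h3 := Nat.ceil_lt_add_one (by linarith [hs0.2] : 0 ≤ β n - βstar)
          linarith
        · have : β j ∈ (∅ : Set ℝ) := he ▸ ⟨j, hj1, hjlt, rfl, hni⟩
          exact this
      obtain ⟨z, hz⟩ := hint
      have hz0 : 0 ≤ z := by
        have : (0:ℝ) ≤ z := by rw [← hz]; linarith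
        exact_mod_cast this
      lift z to ℕ using hz0
      rw [Int.cast_natCast] at hz
      have hzk : z + 1 ≤ k := by
        have : (z:ℝ) + 1 ≤ k := by linarith
        exact_mod_cast this
      have e : β n - (k:ℝ) = β j - ((k - z : ℕ) : ℝ) := by
        rw [Nat.cast_sub (by omega)]; linarith
      rw [e]
      apply FRep.pow
      rw [Finset.mem_Icc]
      have h5 : ⌈β n⌉₊ = ⌈β j⌉₊ + z := by
        rw [← Nat.ceil_add_natCast hj0, ← hz]; congr 1; ring
      omega
  · intro cc cc' g g' hg hg' h
    have hc : ∀ k ∈ Finset.Icc 1 ⌈β n - βstar⌉₊, cc k - cc' k = 0 := by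
      refine no_pow hb hn0 _ (fun k => cc k - cc' k) (fun k : ℕ => β n - (k:ℝ)) ?_ ?_ ?_ ?_
      · intro i _ j _ hij
        exact_mod_cast (by linarith : (i:ℝ) = j)
      · exact fun k hk => Rep_exp hKlt hk
      · intro i hi
        have h3 : (1 : ℝ) ≤ i := by exact_mod_cast (Finset.mem_Icc.1 hi).1
        linarith
      · refine ⟨fun t => g' t - g t, hg'.sub hg, ?_⟩
        filter_upwards [h, RL_sub hb hn0 hg' hg] with t h1 h2
        rw [h2]
        simp only [sub_mul, Finset.sum_sub_distrib]
        linarith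
    have hc' : ∀ k ∈ Finset.Icc 1 ⌈β n - βstar⌉₊, cc k = cc' k :=
      fun k hk => sub_eq_zero.1 (hc k hk)
    refine ⟨hc', RL_inj hb hn0 hg hg' ?_⟩
    filter_upwards [h] with t ht
    have : ∑ k ∈ Finset.Icc 1 ⌈β n - βstar⌉₊, cc k * t ^ (β n - (k:ℝ))
        = ∑ k ∈ Finset.Icc 1 ⌈β n - βstar⌉₊, cc' k * t ^ (β n - (k:ℝ)) :=
      Finset.sum_congr rfl fun k hk => by rw [hc' k hk]
    linarith
end

section
/- (Rust.) Let k ∈ L¹[0,b] and let C(k) denote the convolution operator (C(k)v)(t) = ∫₀^t k(t−s) v(s) ds. Assume that: (1) C(k) maps C[0,b] into C[0,b]; and (2) for all sufficiently large positive integers n, the n-fold composition C(k)^n equals C(k̃) for some continuous kernel k̃ ∈ C[0,b]. Then for every w ∈ C[0,b] the Volterra integral equation of the second kind ∫₀^t k(t−s) v(s) ds + v(t) = w(t), t ∈ [0,b], has exactly one continuous solution v ∈ C[0,b]. -/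
open MeasureTheory Set Filter Topology

/-- Convolution (with base point `0`) of a kernel `k` with `v`. -/
noncomputable def Conv (k v : ℝ → ℝ) : ℝ → ℝ := fun t => ∫ s in (0:ℝ)..t, k (t - s) * v s

lemma conv_congr {k u v : ℝ → ℝ} {b t : ℝ} (ht : t ∈ Icc (0:ℝ) b)
    (h : ∀ s ∈ Icc (0:ℝ) b, u s = v s) : Conv k u t = Conv k v t := by
  unfold Conv
  apply intervalIntegral.integral_congr
  intro s hs
  rw [uIcc_of_le ht.1] at hs
  simp only
  rw [h s ⟨hs.1, hs.2.trans ht.2⟩]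

lemma conv_int {k v : ℝ → ℝ} {b t : ℝ} (hk : IntegrableOn k (Set.Icc 0 b) volume)
    (hv : ContinuousOn v (Icc 0 b)) (ht : t ∈ Icc (0:ℝ) b) :
    IntervalIntegrable (fun s => k (t - s) * v s) volume 0 t := by
  apply IntervalIntegrable.mul_continuousOn
  · have h : IntervalIntegrable k volume 0 t := by
      rw [intervalIntegrable_iff_integrableOn_Icc_of_le ht.1]
      exact hk.mono_set (Icc_subset_Icc_right ht.2)
    have := (h.comp_sub_left t).symm
    simpa using this
  · rw [uIcc_of_le ht.1]
    exact hv.mono (Icc_subset_Icc_right ht.2)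

lemma conv_add {k u v : ℝ → ℝ} {b t : ℝ} (hk : IntegrableOn k (Set.Icc 0 b) volume)
    (hu : ContinuousOn u (Icc 0 b))
    (hv : ContinuousOn v (Icc 0 b)) (ht : t ∈ Icc (0:ℝ) b) :
    Conv k (fun s => u s + v s) t = Conv k u t + Conv k v t := by
  unfold Conv
  rw [← intervalIntegral.integral_add (conv_int hk hu ht) (conv_int hk hv ht)]
  simp only [mul_add]

lemma conv_bound {k v : ℝ → ℝ} {b t M D : ℝ} {m : ℕ} (ht : t ∈ Icc (0:ℝ) b)
    (hM : ∀ s ∈ Icc (0:ℝ) b, |k s| ≤ M)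
    (hv : ∀ s ∈ Icc (0:ℝ) b, |v s| ≤ (M * s) ^ m / (m.factorial : ℝ) * D) :
    |Conv k v t| ≤ (M * t) ^ (m+1) / ((m+1).factorial : ℝ) * D := by
  have hM0 : 0 ≤ M := (abs_nonneg _).trans (hM t ht)
  have e : ∫ s in (0:ℝ)..t, M * ((M * s) ^ m / (m.factorial : ℝ) * D)
      = (M * t) ^ (m+1) / ((m+1).factorial : ℝ) * D := by
    have : ∀ s : ℝ, M * ((M * s) ^ m / (m.factorial : ℝ) * D)
      = (M ^ (m+1) / (m.factorial : ℝ) * D) * s ^ m := by intro s; rw [mul_pow]; ring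
    simp only [this]
    rw [intervalIntegral.integral_const_mul, integral_pow, Nat.factorial_succ, mul_pow]
    have h1 : (m.factorial : ℝ) ≠ 0 := by positivity
    have h2 : (m : ℝ) + 1 ≠ 0 := by positivity
    push_cast
    field_simp
    simp
  rw [← e]
  unfold Conv
  rw [← Real.norm_eq_abs]
  apply intervalIntegral.norm_integral_le_of_norm_le ht.1
  · refine Eventually.of_forall fun s hs => ?_
    rw [norm_mul, Real.norm_eq_abs, Real.norm_eq_abs]
    exact mul_le_mul (hM _ ⟨by linarith [hs.2], by linarith [hs.1, ht.2]⟩)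
      (hv s ⟨hs.1.le, hs.2.trans ht.2⟩) (abs_nonneg _) hM0
  · apply Continuous.intervalIntegrable
    fun_prop

/-- **Rust's theorem** on Volterra integral equations of the second kind: if the convolution
operator `C(k)` with kernel `k ∈ L¹[0,b]` maps `C[0,b]` into `C[0,b]`, and all sufficiently
large iterates `C(k)ⁿ` are convolution operators with continuous kernels, then for every
continuous `w` the equation `(C(k)v)(t) + v(t) = w(t)` has exactly one continuous solution. -/
theorem rust (b : ℝ) (hb : 0 < b) (k : ℝ → ℝ) (hk : IntegrableOn k (Set.Icc 0 b) volume)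
    (h_cont : ∀ h : ℝ → ℝ, ContinuousOn h (Set.Icc 0 b) → ContinuousOn (Conv k h) (Set.Icc 0 b))
    (h_iter : ∃ N : ℕ, ∀ n : ℕ, N ≤ n → ∃ ktil : ℝ → ℝ,
      ContinuousOn ktil (Set.Icc 0 b) ∧
      ∀ v : ℝ → ℝ, IntegrableOn v (Set.Icc 0 b) volume →
        ∀ t ∈ Set.Icc (0:ℝ) b, (Conv k)^[n] v t = Conv ktil v t) :
    ∀ w : ℝ → ℝ, ContinuousOn w (Set.Icc 0 b) →
      ∃ v : ℝ → ℝ, ContinuousOn v (Set.Icc 0 b) ∧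
        (∀ t ∈ Set.Icc (0:ℝ) b, Conv k v t + v t = w t) ∧
        ∀ v' : ℝ → ℝ, ContinuousOn v' (Set.Icc 0 b) →
          (∀ t ∈ Set.Icc (0:ℝ) b, Conv k v' t + v' t = w t) →
          ∀ t ∈ Set.Icc (0:ℝ) b, v' t = v t := by
  obtain ⟨n, hn⟩ := h_iter
  obtain ⟨q, hq, hqe⟩ := hn n le_rfl
  obtain ⟨M, hM⟩ := isCompact_Icc.exists_bound_of_continuousOn hq
  have hM0 : 0 ≤ M := (norm_nonneg _).trans (hM 0 ⟨le_rfl, hb.le⟩)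
  let X := C(Icc (0:ℝ) b, ℝ)
  let E : X → ℝ → ℝ := fun v => IccExtend hb.le v
  have hE : ∀ v : X, Continuous (E v) := fun v => v.continuous.Icc_extend'
  have hEv : ∀ (v : X) (t : ℝ) (ht : t ∈ Icc (0:ℝ) b), E v t = v ⟨t, ht⟩ :=
    fun v t ht => IccExtend_of_mem hb.le v ht
  let R : ∀ u : ℝ → ℝ, ContinuousOn u (Icc 0 b) → X :=
    fun u hu => ⟨(Icc (0:ℝ) b).restrict u, continuousOn_iff_continuous_restrict.1 hu⟩
  let T : X →+ X := AddMonoidHom.mk' (fun v => R (Conv k (E v)) (h_cont _ (hE v).continuousOn))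
    (by
      intro u v
      ext ⟨t, ht⟩
      exact conv_add hk (hE u).continuousOn (hE v).continuousOn ht)
  have hT : ∀ (v : X) (t : ℝ) (ht : t ∈ Icc (0:ℝ) b), E (T v) t = Conv k (E v) t :=
    fun v t ht => hEv (T v) t ht
  have hTj : ∀ (j : ℕ) (v : X) (t : ℝ) (ht : t ∈ Icc (0:ℝ) b),
      E (T^[j] v) t = (Conv k)^[j] (E v) t := by
    intro j
    induction j with
    | zero => intro v t ht; rfl
    | succ j ih =>
      intro v t ht
      rw [Function.iterate_succ_apply', Function.iterate_succ_apply', hT _ t ht]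
      exact conv_congr ht (ih v)
  have hbd : ∀ (m : ℕ) (v : X) (t : ℝ) (ht : t ∈ Icc (0:ℝ) b),
      |E ((T^[n])^[m] v) t| ≤ (M * t) ^ m / (m.factorial : ℝ) * ‖v‖ := by
    intro m
    induction m with
    | zero =>
      intro v t ht
      simp only [Function.iterate_zero, id, pow_zero, Nat.factorial_zero, Nat.cast_one, div_one,
        one_mul]
      rw [hEv v t ht]
      exact v.norm_coe_le_norm _
    | succ m ih =>
      intro v t ht
      rw [Function.iterate_succ_apply', hTj n _ t ht,
        hqe _ ((hE _).continuousOn.integrableOn_Icc) t ht]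
      exact conv_bound ht hM (ih v)
  obtain ⟨m, hm⟩ := ((FloorSemiring.tendsto_pow_div_factorial_atTop (M * b)).eventually
    (gt_mem_nhds one_pos)).exists
  have hKn : 0 ≤ (M * b) ^ m / (m.factorial : ℝ) := by positivity
  have hnorm : ∀ v : X, ‖T^[n*m] v‖ ≤ (M * b) ^ m / (m.factorial : ℝ) * ‖v‖ := by
    intro v
    rw [ContinuousMap.norm_le _ (by positivity)]
    rintro ⟨t, ht⟩
    rw [← hEv _ t ht, Function.iterate_mul]
    refine (hbd m v t ht).trans ?_
    have := ht.1
    have := ht.2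
    gcongr
  intro w hw
  let W : X := R w hw
  let F : X → X := fun v => W - T v
  have hF : ∀ (u v : X) (j : ℕ), F^[j] u - F^[j] v = T^[j] (u - v) ∨
      F^[j] u - F^[j] v = - T^[j] (u - v) := by
    intro u v j
    induction j with
    | zero => left; rfl
    | succ j ih =>
      simp only [Function.iterate_succ_apply']
      have : F (F^[j] u) - F (F^[j] v) = - T (F^[j] u - F^[j] v) := by
        simp only [F, map_sub]; abel
      rw [this]
      rcases ih with h | h
      · right; rw [h]
      · left; rw [h, map_neg, neg_neg]
  have hC : ContractingWith ⟨_, hKn⟩ F^[n*m] := by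
    refine ⟨by exact_mod_cast hm, LipschitzWith.of_dist_le_mul fun u v => ?_⟩
    rw [dist_eq_norm, dist_eq_norm]
    have : ‖F^[n*m] u - F^[n*m] v‖ = ‖T^[n*m] (u - v)‖ := by
      rcases hF u v (n*m) with h | h <;> rw [h]
      rw [norm_neg]
    rw [this]
    exact hnorm _
  haveI : Nonempty X := ⟨0⟩
  have hfix := hC.isFixedPt_fixedPoint_iterate
  set V := ContractingWith.fixedPoint _ hC
  refine ⟨E V, (hE V).continuousOn, ?_, ?_⟩
  · intro t ht
    have h1 : E V t = w t - Conv k (E V) t := by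
      rw [hEv V t ht]
      exact (DFunLike.congr_fun hfix ⟨t, ht⟩).symm
    linarith
  · intro v' hv' h' t ht
    have hE' : ∀ s ∈ Icc (0:ℝ) b, E (R v' hv') s = v' s := fun s hs => hEv _ s hs
    have hfix' : Function.IsFixedPt F (R v' hv') := by
      ext ⟨s, hs⟩
      change w s - Conv k (E (R v' hv')) s = v' s
      rw [conv_congr hs hE', ← h' s hs]; ring
    have : R v' hv' = V := hC.fixedPoint_unique (hfix'.iterate _)
    rw [← hE' t ht, this]
end

section
/- Let α_n > ⋯ > α_1 > 0 and c_1, …, c_n ∈ ℝ, and define Υ = c_n I^{α_n} + ⋯ + c_1 I^{α_1} on L¹[0,b]. Then the operator Υ + Id : L¹[0,b] → L¹[0,b] is injective: if x, y ∈ L¹[0,b] satisfy (Υ + Id)x = (Υ + Id)y almost everywhere, then x = y almost everywhere. -/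
open MeasureTheory Set Filter Topology

open scoped ENNReal

noncomputable def kerK (α : ℝ) : ℝ → ℝ≥0∞ :=
  indicator (Ioi 0) (fun u => ENNReal.ofReal (u ^ (α - 1)))

noncomputable def wE (l : ℝ) (t : ℝ) : ℝ≥0∞ := ENNReal.ofReal (Real.exp (-(l * t)))

noncomputable def conJ (α : ℝ) (g : ℝ → ℝ≥0∞) (t : ℝ) : ℝ≥0∞ := ∫⁻ s, kerK α (t - s) * g s

lemma measurable_kerK (α : ℝ) : Measurable (kerK α) := by
  unfold kerK
  exact Measurable.indicator (by fun_prop) measurableSet_Ioi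

lemma measurable_wE (l : ℝ) : Measurable (wE l) := by
  unfold wE
  fun_prop

lemma wE_add (l s t : ℝ) : wE l (s + t) = wE l s * wE l t := by
  unfold wE
  rw [← ENNReal.ofReal_mul (Real.exp_nonneg _), ← Real.exp_add]
  congr 2
  ring

lemma wE_ne_zero (l t : ℝ) : wE l t ≠ 0 := by
  unfold wE
  simp [Real.exp_pos]

lemma aemeas_joint (α : ℝ) (g : ℝ → ℝ≥0∞) (hg : AEMeasurable g) :
    AEMeasurable (fun p : ℝ × ℝ => kerK α (p.1 - p.2) * g p.2) (volume.prod volume) := by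
  have h1 : Measurable (fun p : ℝ × ℝ => kerK α (p.1 - p.2)) :=
    (measurable_kerK α).comp (measurable_fst.sub measurable_snd)
  exact h1.aemeasurable.mul hg.comp_snd

lemma aemeas_conJ (α : ℝ) (g : ℝ → ℝ≥0∞) (hg : AEMeasurable g) :
    AEMeasurable (conJ α g) :=
  (aemeas_joint α g hg).lintegral_prod_right'

lemma conJ_weight (α l : ℝ) (g : ℝ → ℝ≥0∞) (hg : AEMeasurable g) :
    ∫⁻ t, wE l t * conJ α g t = (∫⁻ u, wE l u * kerK α u) * ∫⁻ s, wE l s * g s := by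
  have hk := measurable_kerK α
  have hw := measurable_wE l
  have e1 : ∀ t, wE l t * conJ α g t = ∫⁻ s, wE l t * (kerK α (t - s) * g s) := by
    intro t
    unfold conJ
    rw [lintegral_const_mul']
    exact ENNReal.ofReal_ne_top
  simp_rw [e1]
  rw [lintegral_lintegral_swap]
  · have e2 : ∀ s, ∫⁻ t, wE l t * (kerK α (t - s) * g s)
        = (∫⁻ u, wE l u * kerK α u) * (wE l s * g s) := by
      intro s
      have : ∀ t, wE l t * (kerK α (t - s) * g s)
          = (wE l (t - s) * kerK α (t - s)) * (wE l s * g s) := by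
        intro t
        have : wE l t = wE l (t - s) * wE l s := by rw [← wE_add]; simp
        rw [this]; ring
      simp_rw [this]
      rw [lintegral_mul_const]
      · rw [lintegral_sub_right_eq_self (fun u => wE l u * kerK α u)]
      · exact (hw.mul hk).comp (measurable_id.sub_const s)
    simp_rw [e2]
    exact lintegral_const_mul'' _ (hw.aemeasurable.mul hg)
  · exact (hw.comp measurable_fst).aemeasurable.mul (aemeas_joint α g hg)

lemma kerK_weight (α l : ℝ) (ha : 0 < α) (hl : 0 < l) :
    ∫⁻ u, wE l u * kerK α u = ENNReal.ofReal ((1 / l) ^ α * Real.Gamma α) := by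
  have hi := Real.integral_rpow_mul_exp_neg_mul_Ioi ha hl
  have hpos : 0 < (1 / l) ^ α * Real.Gamma α := by
    have := Real.Gamma_pos_of_pos ha
    positivity
  have hint : IntegrableOn (fun t : ℝ => t ^ (α - 1) * Real.exp (-(l * t))) (Ioi 0) := by
    by_contra hc
    rw [integral_undef hc] at hi
    exact hpos.ne hi
  rw [← hi, ofReal_integral_eq_lintegral_ofReal hint, ← lintegral_indicator measurableSet_Ioi]
  · congr 1
    ext u
    unfold kerK wE
    by_cases hu : u ∈ Ioi (0:ℝ)
    · simp only [indicator_of_mem hu]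
      rw [mul_comm, ENNReal.ofReal_mul (Real.rpow_nonneg (le_of_lt hu) _)]
    · simp [indicator_of_notMem hu]
  · filter_upwards [ae_restrict_mem measurableSet_Ioi] with u hu
    exact mul_nonneg (Real.rpow_nonneg (le_of_lt hu) _) (Real.exp_nonneg _)

noncomputable def gE (b : ℝ) (x : ℝ → ℝ) : ℝ → ℝ≥0∞ := indicator (Ioc 0 b) (fun s => ‖x s‖ₑ)

lemma gE_aemeas (b : ℝ) (x : ℝ → ℝ) (hx : IntegrableOn x (Ioc 0 b)) :
    AEMeasurable (gE b x) :=
  (aemeasurable_indicator_iff measurableSet_Ioc).2 hx.1.enorm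

lemma gE_fin (b l : ℝ) (hl : 0 < l) (x : ℝ → ℝ) (hx : IntegrableOn x (Ioc 0 b)) :
    ∫⁻ s, wE l s * gE b x s < ∞ := by
  refine lt_of_le_of_lt ?_ hx.2
  rw [← lintegral_indicator measurableSet_Ioc]
  refine lintegral_mono fun s => ?_
  unfold gE
  by_cases hs : s ∈ Ioc 0 b
  · simp only [indicator_of_mem hs]
    refine mul_le_of_le_one_left' ?_
    unfold wE
    rw [ENNReal.ofReal_le_one, Real.exp_le_one_iff]
    have := mul_pos hl hs.1
    linarith
  · simp [indicator_of_notMem hs]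

lemma conJ_ae_fin (b α : ℝ) (ha : 0 < α) (x : ℝ → ℝ) (hx : IntegrableOn x (Ioc 0 b)) :
    ∀ᵐ t, conJ α (gE b x) t < ∞ := by
  have h1 := conJ_weight α 1 _ (gE_aemeas b x hx)
  rw [kerK_weight α 1 ha one_pos] at h1
  have h2 : ∫⁻ t, wE 1 t * conJ α (gE b x) t ≠ ∞ := by
    rw [h1]
    exact ENNReal.mul_ne_top ENNReal.ofReal_ne_top (gE_fin b 1 one_pos x hx).ne
  have h3 := ae_lt_top' ((measurable_wE 1).aemeasurable.mul
    (aemeas_conJ α _ (gE_aemeas b x hx))) h2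
  filter_upwards [h3] with t ht
  by_contra hc
  rw [not_lt, top_le_iff] at hc
  simp only [Pi.mul_apply] at ht
  rw [hc, ENNReal.mul_top (wE_ne_zero _ _)] at ht
  exact lt_irrefl _ ht

lemma lint_le_conJ (b α t : ℝ) (ht : t ≤ b) (x : ℝ → ℝ) :
    ∫⁻ s in Ioo 0 t, ‖(t - s) ^ (α - 1) * x s‖ₑ ≤ conJ α (gE b x) t := by
  rw [← lintegral_indicator measurableSet_Ioo]
  refine lintegral_mono fun s => ?_
  by_cases hs : s ∈ Ioo 0 t
  · rw [indicator_of_mem hs]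
    unfold kerK gE
    have h1 : t - s ∈ Ioi (0:ℝ) := by simpa using hs.2
    have h2 : s ∈ Ioc 0 b := ⟨hs.1, hs.2.le.trans ht⟩
    rw [indicator_of_mem h1, indicator_of_mem h2, enorm_mul,
      Real.enorm_of_nonneg (Real.rpow_nonneg (le_of_lt h1) _)]
  · rw [indicator_of_notMem hs]
    exact zero_le

lemma int_of_fin (b α t : ℝ) (ht : t ≤ b) (x : ℝ → ℝ)
    (hx : IntegrableOn x (Ioc 0 b)) (hf : conJ α (gE b x) t < ∞) :
    IntegrableOn (fun s => (t - s) ^ (α - 1) * x s) (Ioo 0 t) := by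
  refine ⟨?_, (lint_le_conJ b α t ht x).trans_lt hf⟩
  have h1 : Measurable (fun s : ℝ => (t - s) ^ (α - 1)) := by fun_prop
  refine h1.aestronglyMeasurable.mul ?_
  exact (hx.mono_set (fun s hs => ⟨hs.1, hs.2.le.trans ht⟩ : Ioo 0 t ⊆ Ioc 0 b)).1

lemma RL_sub_s15 (b α t : ℝ) (ha : 0 < α) (h0 : 0 ≤ t) (ht : t ≤ b) (x y : ℝ → ℝ)
    (hx : IntegrableOn x (Ioc 0 b)) (hy : IntegrableOn y (Ioc 0 b))
    (hfx : conJ α (gE b x) t < ∞) (hfy : conJ α (gE b y) t < ∞) :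
    ‖RL α x t - RL α y t‖ₑ ≤ ‖1 / Real.Gamma α‖ₑ * conJ α (gE b (x - y)) t := by
  unfold RL
  rw [if_neg ha.ne', if_neg ha.ne', ← mul_sub, enorm_mul]
  gcongr
  rw [intervalIntegral.integral_of_le h0, intervalIntegral.integral_of_le h0,
    integral_Ioc_eq_integral_Ioo, integral_Ioc_eq_integral_Ioo,
    ← integral_sub (int_of_fin b α t ht x hx hfx) (int_of_fin b α t ht y hy hfy)]
  refine (enorm_integral_le_lintegral_enorm _).trans ?_
  refine le_trans (le_of_eq ?_) (lint_le_conJ b α t ht (x - y))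
  simp only [Pi.sub_apply, mul_sub]

lemma exists_l (n : ℕ) (α c : Fin n → ℝ) (hpos : ∀ i, 0 < α i) :
    ∃ l : ℝ, 0 < l ∧ ∑ i, ‖c i‖ₑ * (‖1 / Real.Gamma (α i)‖ₑ *
      ENNReal.ofReal ((1 / l) ^ (α i) * Real.Gamma (α i))) < 1 := by
  have h : Tendsto (fun l : ℝ => ∑ i, ‖c i‖ₑ * (‖1 / Real.Gamma (α i)‖ₑ *
      ENNReal.ofReal ((1 / l) ^ (α i) * Real.Gamma (α i)))) atTop
      (𝓝 (∑ i : Fin n, ‖c i‖ₑ * (‖1 / Real.Gamma (α i)‖ₑ *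
        ENNReal.ofReal (0 * Real.Gamma (α i))))) := by
    refine tendsto_finsetSum _ fun i _ => ?_
    refine ENNReal.Tendsto.const_mul ?_ (Or.inr enorm_ne_top)
    refine ENNReal.Tendsto.const_mul ?_ (Or.inr enorm_ne_top)
    refine ENNReal.tendsto_ofReal (Tendsto.mul_const _ ?_)
    have h1 : Tendsto (fun l : ℝ => 1 / l) atTop (𝓝 0) := by
      simpa using tendsto_inv_atTop_zero (𝕜 := ℝ)
    have h2 := h1.rpow_const (p := α i) (Or.inr (hpos i).le)
    rwa [Real.zero_rpow (hpos i).ne'] at h2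
  have h' := h.eventually_lt_const (u := 1) (by simp)
  obtain ⟨l, h1, h2⟩ := (h'.and (eventually_gt_atTop 0)).exists
  exact ⟨l, h2, h1⟩

/-- The operator `Υ + Id`, with `Υ = c_n I^{α_n} + ⋯ + c_1 I^{α_1}`, is injective
on `L¹[0,b]`. -/
theorem upsilon_add_id_injective (b : ℝ) (hb : 0 < b) (n : ℕ) (α c : Fin n → ℝ)
    (hmono : StrictMono α) (hpos : ∀ i, 0 < α i) (x y : ℝ → ℝ)
    (hx : IntegrableOn x (Set.Icc 0 b) volume) (hy : IntegrableOn y (Set.Icc 0 b) volume)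
    (h : (fun t => (∑ i, c i * RL (α i) x t) + x t)
        =ᵐ[volume.restrict (Set.Icc 0 b)]
      (fun t => (∑ i, c i * RL (α i) y t) + y t)) :
    x =ᵐ[volume.restrict (Set.Icc 0 b)] y := by
  have hx' : IntegrableOn x (Ioc 0 b) := hx.mono_set Ioc_subset_Icc_self
  have hy' : IntegrableOn y (Ioc 0 b) := hy.mono_set Ioc_subset_Icc_self
  have hz' : IntegrableOn (x - y) (Ioc 0 b) := hx'.sub hy'
  rw [Measure.restrict_congr_set Ioc_ae_eq_Icc.symm] at h ⊢
  have hfx : ∀ᵐ t, ∀ i, conJ (α i) (gE b x) t < ∞ :=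
    ae_all_iff.2 fun i => conJ_ae_fin b (α i) (hpos i) x hx'
  have hfy : ∀ᵐ t, ∀ i, conJ (α i) (gE b y) t < ∞ :=
    ae_all_iff.2 fun i => conJ_ae_fin b (α i) (hpos i) y hy'
  have h' := (ae_restrict_iff' measurableSet_Ioc).1 h
  have key : ∀ᵐ t, gE b (x - y) t ≤
      ∑ i, ‖c i‖ₑ * (‖1 / Real.Gamma (α i)‖ₑ * conJ (α i) (gE b (x - y)) t) := by
    filter_upwards [hfx, hfy, h'] with t h1 h2 h3
    by_cases ht : t ∈ Ioc 0 b
    · have h4 := h3 ht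
      have h5 : (x - y) t = -∑ i, c i * (RL (α i) x t - RL (α i) y t) := by
        simp only [Pi.sub_apply, mul_sub, Finset.sum_sub_distrib]
        linarith
      unfold gE
      rw [indicator_of_mem ht, h5, enorm_neg]
      refine (enorm_sum_le _ _).trans (Finset.sum_le_sum fun i _ => ?_)
      rw [enorm_mul]
      gcongr
      exact RL_sub_s15 b (α i) t (hpos i) ht.1.le ht.2 x y hx' hy' (h1 i) (h2 i)
    · unfold gE
      rw [indicator_of_notMem ht]
      exact zero_le
  obtain ⟨l, hl, hq⟩ := exists_l n α c hpos
  have hgm := gE_aemeas b _ hz'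
  have hwm := measurable_wE l
  have hle : ∫⁻ t, wE l t * gE b (x - y) t ≤
      (∑ i, ‖c i‖ₑ * (‖1 / Real.Gamma (α i)‖ₑ *
      ENNReal.ofReal ((1 / l) ^ (α i) * Real.Gamma (α i)))) *
        ∫⁻ t, wE l t * gE b (x - y) t := by
    calc ∫⁻ t, wE l t * gE b (x - y) t
        ≤ ∫⁻ t, ∑ i, (‖c i‖ₑ * ‖1 / Real.Gamma (α i)‖ₑ) *
            (wE l t * conJ (α i) (gE b (x - y)) t) := by
          refine lintegral_mono_ae ?_
          filter_upwards [key] with t ht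
          refine (mul_le_mul_right ht _).trans (le_of_eq ?_)
          rw [Finset.mul_sum]
          refine Finset.sum_congr rfl fun i _ => ?_
          ring
      _ = _ := by
          rw [lintegral_finsetSum', Finset.sum_mul]
          · refine Finset.sum_congr rfl fun i _ => ?_
            rw [lintegral_const_mul' _ _ (ENNReal.mul_ne_top enorm_ne_top enorm_ne_top),
              conJ_weight _ _ _ hgm, kerK_weight _ _ (hpos i) hl]
            ring
          · intro i _
            exact (hwm.aemeasurable.mul (aemeas_conJ (α i) _ hgm)).const_mul _
  have hfin := gE_fin b l hl _ hz'
  have h0 : ∫⁻ t, wE l t * gE b (x - y) t = 0 := by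
    by_contra hne
    have := ENNReal.mul_lt_mul_left hne hfin.ne hq
    rw [one_mul] at this
    exact absurd hle (not_le.2 this)
  replace h0 := (lintegral_eq_zero_iff' (hwm.aemeasurable.mul hgm)).1 h0
  refine (ae_restrict_iff' measurableSet_Ioc).2 ?_
  filter_upwards [h0] with t ht hm
  have h6 : gE b (x - y) t = 0 := by
    simpa [wE_ne_zero] using ht
  unfold gE at h6
  rw [indicator_of_mem hm, enorm_eq_zero] at h6
  exact sub_eq_zero.1 h6
end

section
/- Let α_n > ⋯ > α_1 > 0 and c_1, …, c_n ∈ ℝ, and define Υ = c_n I^{α_n} + ⋯ + c_1 I^{α_1} on L¹[0,b]. Then the operator Υ + Id : L¹[0,b] → L¹[0,b] is surjective: for every f ∈ L¹[0,b] there exists x ∈ L¹[0,b] with (Υ + Id)x = f almost everywhere on [0,b]. -/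
open MeasureTheory Set Filter Topology

open scoped Convolution in
lemma conv_clm (b : ℝ) (K : ℝ → ℝ) (hK : Integrable K) :
    ∃ A : (ℝ →₁[volume] ℝ) →L[ℝ] (ℝ →₁[volume] ℝ),
      ‖A‖ ≤ ∫ u, ‖K u‖ ∧
      ∀ y : ℝ →₁[volume] ℝ, (A y : ℝ → ℝ) =ᵐ[volume]
        fun t => ∫ s, (Ioc 0 b).indicator (y : ℝ → ℝ) s * K (t - s) := by
  let L := ContinuousLinearMap.mul ℝ ℝ
  have hi : ∀ y : ℝ →₁[volume] ℝ, Integrable ((Ioc 0 b).indicator (y : ℝ → ℝ)) volume :=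
    fun y => (L1.integrable_coeFn y).indicator measurableSet_Ioc
  have hc : ∀ y : ℝ →₁[volume] ℝ,
      Integrable (((Ioc 0 b).indicator (y : ℝ → ℝ)) ⋆[L, volume] K) volume :=
    fun y => (hi y).integrable_convolution L hK
  have hex : ∀ y : ℝ →₁[volume] ℝ, ∀ᵐ t : ℝ,
      Integrable (fun s => (Ioc 0 b).indicator (y : ℝ → ℝ) s * K (t - s)) volume :=
    fun y => (hi y).ae_convolution_exists L hK
  let A0 : (ℝ →₁[volume] ℝ) →ₗ[ℝ] (ℝ →₁[volume] ℝ) :=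
    { toFun := fun y => (hc y).toL1 _
      map_add' := by
        intro y z
        rw [← Integrable.toL1_add]
        rw [Integrable.toL1_eq_toL1_iff]
        filter_upwards [hex y, hex z] with t hy hz
        simp only [Pi.add_apply, convolution_def]
        change _ = (∫ s, (Ioc 0 b).indicator (y : ℝ → ℝ) s * K (t - s)) +
          ∫ s, (Ioc 0 b).indicator (z : ℝ → ℝ) s * K (t - s)
        rw [← integral_add hy hz]
        apply integral_congr_ae
        filter_upwards [Lp.coeFn_add y z] with s hs
        by_cases h : s ∈ Ioc 0 b
        · simp only [indicator_of_mem h, hs, Pi.add_apply, L, ContinuousLinearMap.mul_apply']; ring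
        · simp [indicator_of_notMem h, L]
      map_smul' := by
        intro r y
        simp only [RingHom.id_apply]
        rw [← Integrable.toL1_smul]
        rw [Integrable.toL1_eq_toL1_iff]
        filter_upwards with t
        simp only [Pi.smul_apply, convolution_def]
        rw [← integral_smul]
        apply integral_congr_ae
        filter_upwards [Lp.coeFn_smul r y] with s hs
        by_cases h : s ∈ Ioc 0 b
        · simp only [indicator_of_mem h, hs, Pi.smul_apply, L, ContinuousLinearMap.mul_apply',
            smul_eq_mul]; ring
        · simp [indicator_of_notMem h, L] }
  have hb : ∀ y, ‖A0 y‖ ≤ (∫ u, ‖K u‖) * ‖y‖ := by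
    intro y
    change ‖(hc y).toL1 _‖ ≤ _
    rw [L1.norm_of_fun_eq_integral_norm, L1.norm_eq_integral_norm]
    have h1 : Integrable (fun s => ‖(Ioc 0 b).indicator (y : ℝ → ℝ) s‖) volume := (hi y).norm
    have h2 : Integrable (fun s => ‖K s‖) volume := hK.norm
    calc _ ≤ ∫ t, ((fun s => ‖(Ioc 0 b).indicator (y : ℝ → ℝ) s‖) ⋆[L, volume]
              (fun s => ‖K s‖)) t := by
          apply integral_mono (hc y).norm (h1.integrable_convolution L h2)
          intro t
          simp only [convolution_def]
          refine (norm_integral_le_integral_norm _).trans (le_of_eq ?_)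
          simp [L]
      _ = (∫ s, ‖(Ioc 0 b).indicator (y : ℝ → ℝ) s‖) * ∫ s, ‖K s‖ := by
          rw [integral_convolution L h1 h2]; rfl
      _ ≤ (∫ s, ‖y s‖) * ∫ s, ‖K s‖ := by
          gcongr
          · exact (L1.integrable_coeFn y).norm
          · exact fun s => norm_indicator_le_norm_self _ _
      _ = _ := mul_comm _ _
  refine ⟨A0.mkContinuous _ hb, LinearMap.mkContinuous_norm_le _
    (integral_nonneg fun _ => norm_nonneg _) _, fun y => ?_⟩
  exact (hc y).coeFn_toL1

noncomputable def kerW (b a l : ℝ) : ℝ → ℝ :=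
  (Icc 0 b).indicator fun u => Real.exp (-(l * u)) * u ^ (a - 1)

lemma ker0_int (b a : ℝ) (hb : 0 < b) (ha : 0 < a) :
    IntegrableOn (fun u : ℝ => u ^ (a - 1)) (Icc 0 b) volume := by
  have h := intervalIntegral.intervalIntegrable_rpow' (a := 0) (b := b) (r := a - 1) (by linarith)
  rw [intervalIntegrable_iff_integrableOn_Icc_of_le hb.le] at h
  exact h

lemma kerW_int (b a l : ℝ) (hb : 0 < b) (ha : 0 < a) : Integrable (kerW b a l) := by
  unfold kerW
  rw [integrable_indicator_iff measurableSet_Icc]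
  exact (ker0_int b a hb ha).continuousOn_mul (by fun_prop) isCompact_Icc

lemma kerW_tendsto (b a : ℝ) (hb : 0 < b) (ha : 0 < a) :
    Tendsto (fun m : ℕ => ∫ u, ‖kerW b a m u‖) atTop (𝓝 0) := by
  have : (0:ℝ) = ∫ u : ℝ, (0:ℝ) := by simp
  rw [this]
  apply tendsto_integral_of_dominated_convergence
    (fun u => ‖(Icc 0 b).indicator (fun u : ℝ => u ^ (a - 1)) u‖)
  · intro m
    exact (kerW_int b a m hb ha).norm.aestronglyMeasurable
  · exact ((integrable_indicator_iff measurableSet_Icc).2 (ker0_int b a hb ha)).norm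
  · intro m
    filter_upwards with u
    unfold kerW
    by_cases h : u ∈ Icc 0 b
    · simp only [indicator_of_mem h, norm_norm, norm_mul]
      have : ‖Real.exp (-(m * u))‖ ≤ 1 := by
        rw [Real.norm_eq_abs, Real.abs_exp]
        apply Real.exp_le_one_iff.2
        have := mul_nonneg (Nat.cast_nonneg (α := ℝ) m) h.1
        linarith
      exact mul_le_of_le_one_left (norm_nonneg _) this
    · simp [indicator_of_notMem h]
  · have h0 : ∀ᵐ u : ℝ, u ≠ 0 := by simp [ae_iff]
    filter_upwards [h0] with u hu
    unfold kerW
    by_cases h : u ∈ Icc 0 b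
    · simp only [indicator_of_mem h]
      have hu' : 0 < u := lt_of_le_of_ne h.1 (Ne.symm hu)
      have h1 : Tendsto (fun m : ℕ => Real.exp (-(m * u))) atTop (𝓝 0) := by
        apply Real.tendsto_exp_neg_atTop_nhds_zero.comp
        exact tendsto_natCast_atTop_atTop.atTop_mul_const hu'
      simpa using (h1.mul_const (u ^ (a - 1))).norm
    · simp [indicator_of_notMem h]

/-- The operator `Υ + Id`, with `Υ = c_n I^{α_n} + ⋯ + c_1 I^{α_1}`, is surjective
on `L¹[0,b]`. -/
theorem upsilon_add_id_surjective (b : ℝ) (hb : 0 < b) (n : ℕ) (α c : Fin n → ℝ)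
    (hmono : StrictMono α) (hpos : ∀ i, 0 < α i) (f : ℝ → ℝ)
    (hf : IntegrableOn f (Set.Icc 0 b) volume) :
    ∃ x : ℝ → ℝ, IntegrableOn x (Set.Icc 0 b) volume ∧
      (fun t => (∑ i, c i * RL (α i) x t) + x t)
        =ᵐ[volume.restrict (Set.Icc 0 b)] f := by
  let d : Fin n → ℝ := fun i => c i * (1 / Real.Gamma (α i))
  have hlim : Tendsto (fun m : ℕ => ∑ i, ‖d i‖ * ∫ u, ‖kerW b (α i) m u‖) atTop (𝓝 0) := by
    have := tendsto_finsetSum Finset.univ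
      (fun i _ => (kerW_tendsto b (α i) hb (hpos i)).const_mul ‖d i‖)
    simpa using this
  obtain ⟨m, hm⟩ := (hlim.eventually (gt_mem_nhds one_pos)).exists
  choose A hA1 hA2 using fun i => conv_clm b (kerW b (α i) m) (kerW_int b (α i) m hb (hpos i))
  let B : (ℝ →₁[volume] ℝ) →L[ℝ] (ℝ →₁[volume] ℝ) := ∑ i, d i • A i
  have hB : ‖-B‖ < 1 := by
    rw [norm_neg]
    refine lt_of_le_of_lt ((norm_sum_le _ _).trans (Finset.sum_le_sum fun i _ => ?_)) hm
    rw [norm_smul]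
    exact mul_le_mul_of_nonneg_left (hA1 i) (norm_nonneg _)
  have hF : Integrable ((Icc 0 b).indicator fun t => Real.exp (-(m * t)) * f t) volume := by
    rw [integrable_indicator_iff measurableSet_Icc]
    exact hf.continuousOn_mul (by fun_prop) isCompact_Icc
  obtain ⟨u, hu⟩ := isUnit_one_sub_of_norm_lt_one hB
  let y : ℝ →₁[volume] ℝ := (↑u⁻¹ : (ℝ →₁[volume] ℝ) →L[ℝ] (ℝ →₁[volume] ℝ)) (hF.toL1 _)
  have hy : y + ∑ i, d i • A i y = hF.toL1 _ := by
    have h1 : (↑u * ↑u⁻¹ : (ℝ →₁[volume] ℝ) →L[ℝ] (ℝ →₁[volume] ℝ)) (hF.toL1 _)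
      = hF.toL1 _ := by rw [Units.mul_inv]; rfl
    rw [ContinuousLinearMap.mul_apply, hu] at h1
    rw [← h1]
    change _ = (1 - -B) y
    simp [B, ContinuousLinearMap.sum_apply]
  refine ⟨fun t => Real.exp (m * t) * y t, ?_, ?_⟩
  · exact (L1.integrable_coeFn y).integrableOn.continuousOn_mul (by fun_prop) isCompact_Icc
  have hsum : ∀ s : Finset (Fin n), ((∑ i ∈ s, d i • A i y : ℝ →₁[volume] ℝ) : ℝ → ℝ) =ᵐ[volume]
      fun t => ∑ i ∈ s, d i * ∫ s, (Ioc 0 b).indicator (y : ℝ → ℝ) s * kerW b (α i) m (t - s) := by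
    intro s
    induction s using Finset.induction_on with
    | empty =>
      simp only [Finset.sum_empty]
      exact Lp.coeFn_zero ℝ 1 volume
    | insert i s hi ih =>
      rw [Finset.sum_insert hi]
      filter_upwards [Lp.coeFn_add (d i • A i y) (∑ i ∈ s, d i • A i y), Lp.coeFn_smul (d i) (A i y),
        ih, hA2 i y] with t h1 h2 h3 h4
      rw [h1, Finset.sum_insert hi, Pi.add_apply, h2, h3, Pi.smul_apply, h4, smul_eq_mul]
  have hfin := hF.coeFn_toL1
  rw [← hy] at hfin
  rw [EventuallyEq, ae_restrict_iff' measurableSet_Icc]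
  filter_upwards [hfin, Lp.coeFn_add y (∑ i, d i • A i y), hsum Finset.univ] with t h1 h2 h3 ht
  rw [h2, Pi.add_apply, h3, indicator_of_mem ht] at h1
  have key : ∀ i, c i * RL (α i) (fun t => Real.exp (m * t) * y t) t = Real.exp (m * t) *
      (d i * ∫ s, (Ioc 0 b).indicator (y : ℝ → ℝ) s * kerW b (α i) m (t - s)) := by
    intro i
    have e : (∫ s in (0:ℝ)..t, (t - s) ^ (α i - 1) * (Real.exp (m * s) * y s)) =
        Real.exp (m * t) *
          ∫ s, (Ioc 0 b).indicator (y : ℝ → ℝ) s * kerW b (α i) m (t - s) := by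
      rw [intervalIntegral.integral_of_le ht.1, ← integral_indicator measurableSet_Ioc,
        ← integral_const_mul]
      congr 1
      ext s
      by_cases hs : s ∈ Ioc 0 t
      · have hs1 : s ∈ Ioc 0 b := ⟨hs.1, hs.2.trans ht.2⟩
        have hs2 : t - s ∈ Icc 0 b := ⟨by linarith [hs.2], by linarith [hs.1, ht.2]⟩
        rw [indicator_of_mem hs, indicator_of_mem hs1, kerW, indicator_of_mem hs2]
        have : Real.exp (m * s) = Real.exp (m * t) * Real.exp (-(m * (t - s))) := by
          rw [← Real.exp_add]; congr 1; ring
        rw [this]; ring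
      · rw [indicator_of_notMem hs]
        by_cases hs1 : s ∈ Ioc 0 b
        · have hs2 : t - s ∉ Icc 0 b := fun h => hs ⟨hs1.1, by linarith [h.1]⟩
          rw [kerW, indicator_of_notMem hs2]; simp
        · rw [indicator_of_notMem hs1]; simp
    simp only [RL, if_neg (hpos i).ne', e, d]
    ring
  simp only [key]
  rw [← Finset.mul_sum, ← mul_add, add_comm, h1, ← mul_assoc, ← Real.exp_add]
  simp
end

section
/- Let α_n > ⋯ > α_1 > 0 and c_1, …, c_n ∈ ℝ, and define Υ = c_n I^{α_n} + ⋯ + c_1 I^{α_1} on L¹[0,b]. Then Υ + Id is an invertible bounded linear map from the Banach space L¹[0,b] to itself whose inverse is also bounded. In particular, for every f ∈ L¹[0,b] the fractional integral equation (Υ + Id)x = f has exactly one solution x ∈ L¹[0,b]. -/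
open MeasureTheory Set Filter Topology

noncomputable def CV (b : ℝ) (k x : ℝ → ℝ) (t : ℝ) : ℝ :=
  ∫ s, (Icc (0:ℝ) b).indicator x s * k (t - s)

lemma CV_congr {b : ℝ} {k x y : ℝ → ℝ} (h : x =ᵐ[volume.restrict (Icc (0:ℝ) b)] y) :
    CV b k x = CV b k y := by
  funext t
  apply integral_congr_ae
  have := (ae_restrict_iff' (measurableSet_Icc)).1 h
  filter_upwards [this] with s hs
  by_cases h' : s ∈ Icc (0:ℝ) b
  · simp [h', hs h']
  · simp [h']

lemma CV_integrable {b : ℝ} {k x : ℝ → ℝ} (hk : Integrable k)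
    (hx : IntegrableOn x (Icc (0:ℝ) b)) : Integrable (CV b k x) :=
  ((integrable_indicator_iff measurableSet_Icc).2 hx).integrable_convolution
    (ContinuousLinearMap.mul ℝ ℝ) hk

lemma CV_ae {b : ℝ} {k x : ℝ → ℝ} (hk : Integrable k)
    (hx : IntegrableOn x (Icc (0:ℝ) b)) :
    ∀ᵐ t, Integrable (fun s => (Icc (0:ℝ) b).indicator x s * k (t - s)) :=
  ((integrable_indicator_iff measurableSet_Icc).2 hx).ae_convolution_exists
    (ContinuousLinearMap.mul ℝ ℝ) hk

lemma CV_norm {b : ℝ} {k x : ℝ → ℝ} (hk : Integrable k)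
    (hx : IntegrableOn x (Icc (0:ℝ) b)) :
    ∫ t in Icc (0:ℝ) b, ‖CV b k x t‖ ≤ (∫ u, ‖k u‖) * ∫ s in Icc (0:ℝ) b, ‖x s‖ := by
  have hx' := ((integrable_indicator_iff measurableSet_Icc).2 hx)
  have h1 := integral_convolution (μ := volume) (ν := volume) (ContinuousLinearMap.mul ℝ ℝ) hx'.norm hk.norm
  have h2 := hx'.norm.integrable_convolution (ContinuousLinearMap.mul ℝ ℝ) hk.norm
  calc _ ≤ ∫ t, ‖CV b k x t‖ :=
        setIntegral_le_integral (CV_integrable hk hx).norm (ae_of_all _ fun _ => norm_nonneg _)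
    _ ≤ _ := integral_mono (CV_integrable hk hx).norm h2 (fun t => by
        refine (norm_integral_le_integral_norm _).trans_eq ?_
        apply integral_congr_ae
        exact ae_of_all _ fun s => by simp)
    _ = _ := by
        rw [h1]
        simp only [ContinuousLinearMap.mul_apply', norm_indicator_eq_indicator_norm]
        rw [integral_indicator measurableSet_Icc, mul_comm]

lemma CV_exp (b lam : ℝ) (k x : ℝ → ℝ) (t : ℝ) :
    CV b (fun u => Real.exp (-lam * u) * k u) (fun s => Real.exp (-lam * s) * x s) t
      = Real.exp (-lam * t) * CV b k x t := by
  unfold CV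
  rw [← integral_const_mul]
  congr 1
  funext s
  have : Real.exp (-lam * t) = Real.exp (-lam * s) * Real.exp (-lam * (t - s)) := by
    rw [← Real.exp_add]; ring_nf
  by_cases h' : s ∈ Icc (0:ℝ) b
  · simp only [h', indicator_of_mem, this]; ring
  · simp [h']

noncomputable abbrev LL (b : ℝ) := Lp ℝ 1 (volume.restrict (Icc (0:ℝ) b))

lemma LL_int {b : ℝ} (x : LL b) : IntegrableOn x (Icc (0:ℝ) b) := L1.integrable_coeFn x

noncomputable def VL (b : ℝ) (k : ℝ → ℝ) (hk : Integrable k) : LL b →ₗ[ℝ] LL b where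
  toFun x := (CV_integrable hk (LL_int x)).restrict.toL1 (CV b k x)
  map_add' x y := by
    rw [← Integrable.toL1_add]
    rw [Integrable.toL1_eq_toL1_iff]
    rw [CV_congr (Lp.coeFn_add x y)]
    filter_upwards [ae_restrict_of_ae (CV_ae hk (LL_int x)),
      ae_restrict_of_ae (CV_ae hk (LL_int y))] with t h1 h2
    simp only [Pi.add_apply]
    unfold CV
    rw [← integral_add h1 h2]
    congr 1
    funext s
    rw [Set.indicator_add', Pi.add_apply, add_mul]
  map_smul' r x := by
    simp only [RingHom.id_apply]
    rw [← Integrable.toL1_smul]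
    rw [Integrable.toL1_eq_toL1_iff]
    rw [CV_congr (Lp.coeFn_smul r x)]
    refine ae_of_all _ fun t => ?_
    unfold CV
    simp only [smul_eq_mul]
    rw [← integral_const_mul]
    congr 1
    funext s
    by_cases h' : s ∈ Icc (0:ℝ) b
    · simp [h', mul_assoc]
    · simp [h']

lemma VL_bound {b : ℝ} {k : ℝ → ℝ} (hk : Integrable k) (x : LL b) :
    ‖VL b k hk x‖ ≤ (∫ u, ‖k u‖) * ‖x‖ := by
  rw [L1.norm_eq_integral_norm, L1.norm_eq_integral_norm]
  refine le_trans (le_of_eq ?_) (CV_norm hk (LL_int x))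
  apply integral_congr_ae
  filter_upwards [Integrable.coeFn_toL1 (CV_integrable hk (LL_int x)).restrict] with t ht
  exact congrArg _ ht

noncomputable def VC (b : ℝ) (k : ℝ → ℝ) (hk : Integrable k) : LL b →L[ℝ] LL b :=
  (VL b k hk).mkContinuous _ (VL_bound hk)

lemma VC_norm {b : ℝ} {k : ℝ → ℝ} (hk : Integrable k) : ‖VC b k hk‖ ≤ ∫ u, ‖k u‖ :=
  LinearMap.mkContinuous_norm_le _ (integral_nonneg fun _ => norm_nonneg _) _

lemma VC_coe {b : ℝ} {k : ℝ → ℝ} (hk : Integrable k) (x : LL b) :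
    (VC b k hk x : ℝ → ℝ) =ᵐ[volume.restrict (Icc (0:ℝ) b)] CV b k x :=
  Integrable.coeFn_toL1 (CV_integrable hk (LL_int x)).restrict

/-- combined operator -/
noncomputable def WC (b : ℝ) {n : ℕ} (d : Fin n → ℝ) (k : Fin n → ℝ → ℝ)
    (hk : ∀ i, Integrable (k i)) : LL b →L[ℝ] LL b := ∑ i, d i • VC b (k i) (hk i)

lemma WC_coe {b : ℝ} {n : ℕ} {d : Fin n → ℝ} {k : Fin n → ℝ → ℝ}
    (hk : ∀ i, Integrable (k i)) (x : LL b) :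
    ((1 + WC b d k hk) x : LL b) =ᵐ[volume.restrict (Icc (0:ℝ) b)]
      fun t => (∑ i, d i * CV b (k i) x t) + x t := by
  have h0 : ((1 + WC b d k hk) x : LL b) = x + ∑ i, d i • VC b (k i) (hk i) x := by
    simp [WC]
  rw [h0]
  have h1 := Lp.coeFn_add x (∑ i, d i • VC b (k i) (hk i) x)
  have h2 := Lp.coeFn_finsetSum Finset.univ (fun i => d i • VC b (k i) (hk i) x)
  have h3 : ∀ i, _ := fun i => Lp.coeFn_smul (d i) (VC b (k i) (hk i) x)
  have h4 : ∀ i, _ := fun i => VC_coe (hk i) x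
  filter_upwards [h1, h2, ae_all_iff.2 h3, ae_all_iff.2 h4] with t h1 h2 h3 h4
  rw [h1, Pi.add_apply, h2, add_comm]
  simp only [Finset.sum_apply, h3, Pi.smul_apply, h4, smul_eq_mul]

noncomputable def ek (lam : ℝ) (k : ℝ → ℝ) : ℝ → ℝ := fun u => Real.exp (-lam * u) * k u

lemma mul_exp_int {b : ℝ} (lam : ℝ) {x : ℝ → ℝ} (hx : IntegrableOn x (Icc (0:ℝ) b)) :
    IntegrableOn (ek lam x) (Icc (0:ℝ) b) :=
  hx.continuousOn_mul (by fun_prop) isCompact_Icc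

lemma bij_of {b : ℝ} {n : ℕ} {d : Fin n → ℝ} {k : Fin n → ℝ → ℝ}
    (hk : ∀ i, Integrable (k i)) (lam : ℝ) (hk' : ∀ i, Integrable (ek lam (k i)))
    (hb : Function.Bijective (1 + WC b d (fun i => ek lam (k i)) hk' : LL b →L[ℝ] LL b)) :
    Function.Bijective (1 + WC b d k hk : LL b →L[ℝ] LL b) := by
  -- relation
  have key : ∀ x y : LL b, y =ᵐ[volume.restrict (Icc (0:ℝ) b)] ek lam x →
      ((1 + WC b d (fun i => ek lam (k i)) hk') y : LL b) =ᵐ[volume.restrict (Icc (0:ℝ) b)]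
        ek lam ((1 + WC b d k hk) x : LL b) := by
    intro x y h
    filter_upwards [WC_coe hk x (d := d), WC_coe hk' y (d := d), h] with t h1 h2 h3
    rw [h2]
    unfold ek at *
    rw [h1, h3]
    have : ∀ i, CV b (fun u => Real.exp (-lam * u) * k i u) y t =
        Real.exp (-lam * t) * CV b (k i) x t := by
      intro i
      rw [CV_congr h, CV_exp]
    simp only [this]
    rw [mul_add, Finset.mul_sum]
    congr 1
    exact Finset.sum_congr rfl fun i _ => by ring
  have cancel : ∀ x y : LL b, ek lam x =ᵐ[volume.restrict (Icc (0:ℝ) b)] ek lam y → x = y := by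
    intro x y h
    apply Lp.ext
    filter_upwards [h] with t ht
    exact mul_left_cancel₀ (Real.exp_pos _).ne' ht
  constructor
  · intro x x' h
    have hx := Integrable.coeFn_toL1 (mul_exp_int lam (LL_int x))
    have hx' := Integrable.coeFn_toL1 (mul_exp_int lam (LL_int x'))
    have e1 := key x _ hx
    have e2 := key x' _ hx'
    rw [h] at e1
    have e3 := hb.1 (Lp.ext (e1.trans e2.symm))
    apply cancel
    rw [e3] at hx
    exact hx.symm.trans hx'
  · intro f
    obtain ⟨y, hy⟩ := hb.2 ((mul_exp_int lam (LL_int f)).toL1 _)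
    have hz := Integrable.coeFn_toL1 (mul_exp_int (-lam) (LL_int y))
    refine ⟨(mul_exp_int (-lam) (LL_int y)).toL1 _, ?_⟩
    apply cancel
    have e1 := key ((mul_exp_int (-lam) (LL_int y)).toL1 _) y (by
      filter_upwards [hz] with t ht
      unfold ek at *
      rw [ht, ← mul_assoc, ← Real.exp_add]
      simp)
    refine e1.symm.trans ?_
    rw [hy]
    exact Integrable.coeFn_toL1 _

lemma ek_int {k : ℝ → ℝ} (hk : Integrable k) (h0 : ∀ u ≤ 0, k u = 0) {lam : ℝ} (hl : 0 ≤ lam) :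
    Integrable (ek lam k) := by
  refine hk.mono ?_ (ae_of_all _ fun u => ?_)
  · exact (Continuous.aestronglyMeasurable (by fun_prop)).mul hk.1
  · rcases le_or_gt u 0 with h | h
    · simp [ek, h0 u h]
    · simp only [ek, norm_mul, Real.norm_eq_abs, Real.abs_exp]
      refine mul_le_of_le_one_left (abs_nonneg _) (Real.exp_le_one_iff.2 ?_)
      nlinarith

lemma ek_tendsto {k : ℝ → ℝ} (hk : Integrable k) (h0 : ∀ u ≤ 0, k u = 0) :
    Tendsto (fun m : ℕ => ∫ u, ‖ek m k u‖) atTop (𝓝 0) := by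
  rw [show (0:ℝ) = ∫ u : ℝ, (0:ℝ) by simp]
  apply tendsto_integral_of_dominated_convergence (fun u => ‖k u‖)
  · exact fun m => (ek_int hk h0 (Nat.cast_nonneg m)).norm.1
  · exact hk.norm
  · intro m
    refine ae_of_all _ fun u => ?_
    rw [norm_norm]
    rcases le_or_gt u 0 with h | h
    · simp [ek, h0 u h]
    · simp only [ek, norm_mul, Real.norm_eq_abs, Real.abs_exp]
      refine mul_le_of_le_one_left (abs_nonneg _) (Real.exp_le_one_iff.2 ?_)
      have : (0:ℝ) ≤ m := Nat.cast_nonneg m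
      nlinarith
  · refine ae_of_all _ fun u => ?_
    rcases le_or_gt u 0 with h | h
    · simp [ek, h0 u h]
    · simp only [ek, norm_mul, Real.norm_eq_abs, Real.abs_exp]
      rw [show (0:ℝ) = 0 * |k u| by simp]
      refine Tendsto.mul_const _ (Real.tendsto_exp_atBot.comp ?_)
      have h1 : Tendsto (fun m : ℕ => (m:ℝ) * u) atTop atTop :=
        tendsto_natCast_atTop_atTop.atTop_mul_const h
      simpa [neg_mul] using h1

lemma bij_main {b : ℝ} {n : ℕ} {d : Fin n → ℝ} {k : Fin n → ℝ → ℝ}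
    (hk : ∀ i, Integrable (k i)) (h0 : ∀ i, ∀ u ≤ 0, k i u = 0) :
    Function.Bijective (1 + WC b d k hk : LL b →L[ℝ] LL b) := by
  have ht : Tendsto (fun m : ℕ => ∑ i, |d i| * ∫ u, ‖ek m (k i) u‖) atTop (𝓝 0) := by
    rw [show (0:ℝ) = ∑ i : Fin n, |d i| * 0 by simp]
    exact tendsto_finsetSum _ fun i _ => (ek_tendsto (hk i) (h0 i)).const_mul _
  obtain ⟨m, hm⟩ := (ht.eventually (gt_mem_nhds one_pos)).exists
  have hk' : ∀ i, Integrable (ek m (k i)) := fun i => ek_int (hk i) (h0 i) (Nat.cast_nonneg m)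
  apply bij_of hk m hk'
  rw [← ContinuousLinearMap.isUnit_iff_bijective]
  have := isUnit_one_sub_of_norm_lt_one (x := - WC b d (fun i => ek m (k i)) hk') (by
    rw [norm_neg]
    refine lt_of_le_of_lt ?_ hm
    refine (norm_sum_le _ _).trans (Finset.sum_le_sum fun i _ => ?_)
    rw [norm_smul, Real.norm_eq_abs]
    exact mul_le_mul_of_nonneg_left (VC_norm _) (abs_nonneg _))
  rwa [sub_neg_eq_add] at this

noncomputable def rlk (b α : ℝ) : ℝ → ℝ := (Ioc 0 b).indicator (fun u => u ^ (α - 1))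

lemma ker_int {b α : ℝ} (hb : 0 < b) (hα : 0 < α) : Integrable (rlk b α) := by
  rw [rlk, integrable_indicator_iff measurableSet_Ioc,
    ← intervalIntegrable_iff_integrableOn_Ioc_of_le hb.le]
  exact intervalIntegral.intervalIntegrable_rpow' (by linarith)

lemma RL_eq {b α : ℝ} (hα : 0 < α) (x : ℝ → ℝ) {t : ℝ} (ht : t ∈ Icc (0:ℝ) b) :
    RL α x t = (1 / Real.Gamma α) * CV b (rlk b α) x t := by
  rw [RL, if_neg hα.ne', intervalIntegral.integral_of_le ht.1, integral_Ioc_eq_integral_Ioo,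
    ← integral_Ico_eq_integral_Ioo, ← integral_indicator measurableSet_Ico, CV]
  congr 2
  funext s
  simp only [rlk, indicator, mem_Ico, mem_Icc, mem_Ioc] at *
  by_cases h : 0 ≤ s ∧ s < t
  · rw [if_pos h, if_pos ⟨h.1, by linarith⟩, if_pos ⟨by linarith, by linarith⟩, mul_comm]
  · rw [if_neg h]
    by_cases h1 : 0 ≤ s
    · rw [if_neg (c := 0 < t - s ∧ _)]
      · simp
      · intro h2; exact h ⟨h1, by linarith⟩
    · rw [if_neg (fun h2 => h1 h2.1)]; simp

/-- `Υ + Id` (with `Υ = c_n I^{α_n} + ⋯ + c_1 I^{α_1}`) is an invertible bounded linear map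
from the Banach space `L¹[0,b]` to itself with bounded inverse (a continuous linear
equivalence); in particular, for every `f ∈ L¹[0,b]` the fractional integral equation
`(Υ + Id) x = f` has exactly one solution `x ∈ L¹[0,b]`. -/
theorem upsilon_add_id_automorphism (b : ℝ) (hb : 0 < b) (n : ℕ) (α c : Fin n → ℝ)
    (hmono : StrictMono α) (hpos : ∀ i, 0 < α i) :
    (∃ T : Lp ℝ 1 (volume.restrict (Icc (0:ℝ) b)) ≃L[ℝ] Lp ℝ 1 (volume.restrict (Icc (0:ℝ) b)),
      ∀ x : Lp ℝ 1 (volume.restrict (Icc (0:ℝ) b)),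
        (T x : ℝ → ℝ) =ᵐ[volume.restrict (Icc (0:ℝ) b)]
          fun t => (∑ i, c i * RL (α i) x t) + x t) ∧
    ∀ f : ℝ → ℝ, IntegrableOn f (Set.Icc 0 b) volume →
      ∃ x : ℝ → ℝ,
        (IntegrableOn x (Set.Icc 0 b) volume ∧
          (fun t => (∑ i, c i * RL (α i) x t) + x t)
            =ᵐ[volume.restrict (Set.Icc 0 b)] f) ∧
        ∀ x' : ℝ → ℝ, IntegrableOn x' (Set.Icc 0 b) volume →
          (fun t => (∑ i, c i * RL (α i) x' t) + x' t)
            =ᵐ[volume.restrict (Set.Icc 0 b)] f →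
          x' =ᵐ[volume.restrict (Set.Icc 0 b)] x := by
  set d : Fin n → ℝ := fun i => c i * (1 / Real.Gamma (α i)) with hd
  have hk : ∀ i, Integrable (rlk b (α i)) := fun i => ker_int hb (hpos i)
  have hbij : Function.Bijective (1 + WC b d (fun i => rlk b (α i)) hk : LL b →L[ℝ] LL b) :=
    bij_main hk (fun i u hu => indicator_of_notMem (fun h => absurd h.1 (not_lt.2 hu)) _)
  have hRL : ∀ x : ℝ → ℝ, (fun t => (∑ i, c i * RL (α i) x t) + x t)
      =ᵐ[volume.restrict (Icc (0:ℝ) b)]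
      fun t => (∑ i, d i * CV b (rlk b (α i)) x t) + x t := by
    intro x
    filter_upwards [ae_restrict_mem measurableSet_Icc] with t ht
    congr 1
    exact Finset.sum_congr rfl fun i _ => by rw [RL_eq (hpos i) x ht, hd, mul_assoc]
  let T := ContinuousLinearEquiv.ofBijective (1 + WC b d (fun i => rlk b (α i)) hk)
    (LinearMap.ker_eq_bot.2 hbij.1) (LinearMap.range_eq_top.2 hbij.2)
  have hT : ∀ x : LL b, (T x : ℝ → ℝ) =ᵐ[volume.restrict (Icc (0:ℝ) b)]
      fun t => (∑ i, c i * RL (α i) x t) + x t := fun x => (WC_coe hk x).trans (hRL x).symm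
  refine ⟨⟨T, hT⟩, fun f hf => ?_⟩
  have hff := Integrable.coeFn_toL1 hf
  refine ⟨T.symm (hf.toL1 f), ⟨LL_int _, ?_⟩, fun x' hx' h => ?_⟩
  · refine (hT _).symm.trans ?_
    rw [T.apply_symm_apply]
    exact hff
  · have hxx := Integrable.coeFn_toL1 hx'
    have : T (hx'.toL1 x') = hf.toL1 f := by
      apply Lp.ext
      refine (hT _).trans (EventuallyEq.trans ?_ hff.symm)
      refine EventuallyEq.trans ?_ h
      refine (hRL _).trans (EventuallyEq.trans ?_ (hRL x').symm)
      filter_upwards [hxx] with t ht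
      rw [ht]
      congr 1
      exact Finset.sum_congr rfl fun i _ => by rw [CV_congr hxx]
    rw [← this, T.symm_apply_apply]
    exact hxx.symm
end
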